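/- arXiv:2207.06575 — 2 statements merged into one kernel-verified Lean document; each statement's English description precedes it below -/
import Mathlib

section
/- Let F be a finite extension of ℚ₂ that contains a primitive cube root of unity. Then there is no Galois extension of F with Galois group isomorphic to the symmetric group S₄; that is, ν(F,S₄) = 0. -/
/-- `nu F G` is the number of intermediate fields `K` of a fixed algebraic closure of `F`
such that `K/F` is a finite Galois extension with Galois group isomorphic to `G`. -/
noncomputable def nu (F : Type*) [Field F] (G : Type*) [Group G] : ℕ :=
  Nat.card {K : IntermediateField F (AlgebraicClosure F) //
    FiniteDimensional F K ∧ IsGalois F K ∧ Nonempty ((K ≃ₐ[F] K) ≃* G)}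

lemma finfield_cube {k : Type*} [Field k] [Finite k] (s : k →+* k) (z u : k) (hz3 : z ^ 3 = 1)
    (hz1 : z ≠ 1) (hsz : s z = z) (hu : s u * u = 1) : ∃ c : k, c ^ 3 = u := by
  have hu0 : u ≠ 0 := by rintro rfl; simp at hu
  have hz0 : z ≠ 0 := by rintro rfl; simp at hz3
  obtain ⟨m, hm⟩ := MonoidHom.map_cyclic (Units.map (s : k →* k))
  have h1 := hm (Units.mk0 z hz0)
  have h2 := hm (Units.mk0 u hu0)
  have e1 : Units.map (s : k →* k) (Units.mk0 z hz0) = Units.mk0 z hz0 := by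
    ext; simp [hsz]
  have e2 : Units.map (s : k →* k) (Units.mk0 u hu0) * Units.mk0 u hu0 = 1 := by
    ext; simp [hu]
  rw [e1] at h1
  rw [h2] at e2
  have ho : orderOf (Units.mk0 z hz0) = 3 := by
    apply orderOf_eq_prime
    · ext; simpa using hz3
    · intro h; apply hz1; simpa using congrArg Units.val h
  have hd : (3 : ℤ) ∣ m - 1 := by
    have : (Units.mk0 z hz0) ^ (m - 1) = 1 := by
      rw [zpow_sub_one, ← h1, mul_inv_cancel]
    have := orderOf_dvd_iff_zpow_eq_one.mpr this
    rwa [ho] at this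
  obtain ⟨t, ht⟩ := hd
  have hmt : m = 3 * t + 1 := by omega
  refine ⟨((Units.mk0 u hu0 ^ (1 + t) : kˣ) : k), ?_⟩
  have key : ((Units.mk0 u hu0) ^ (1 + t)) ^ (3 : ℕ) = Units.mk0 u hu0 := by
    rw [← zpow_natCast, ← zpow_mul]
    have : (1 + t) * ((3 : ℕ) : ℤ) = m + 1 + 1 := by push_cast; omega
    rw [this, zpow_add_one, zpow_add_one, e2, one_mul]
  simpa using congrArg Units.val key

lemma ultra_sub_le_max {M : Type*} [NormedField M] [IsUltrametricDist M] (x y : M) :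
    ‖x - y‖ ≤ max ‖x‖ ‖y‖ := by
  rw [sub_eq_add_neg, ← norm_neg y]
  exact IsUltrametricDist.norm_add_le_max _ _

lemma one_add_cube {M : Type*} [NormedField M] [IsUltrametricDist M] [ProperSpace M]
    (h2 : ‖(2 : M)‖ < 1) (x : M) (hx : ‖x - 1‖ < 1) : ∃ c : M, c ^ 3 = x := by
  set r := max ‖x - 1‖ ‖(2 : M)‖ with hr
  have hr1 : r < 1 := max_lt hx h2
  have hr0 : 0 ≤ r := le_trans (norm_nonneg _) (le_max_left _ _)
  have hpow : ∀ n : ℕ, ‖x ^ (2 ^ n) - 1‖ ≤ r ^ (n + 1) := by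
    intro n
    induction n with
    | zero => simp [hr]
    | succ n ih =>
      have e : x ^ (2 ^ (n + 1)) - 1 = (x ^ (2 ^ n) - 1) * ((x ^ (2 ^ n) - 1) + 2) := by
        rw [pow_succ 2 n, pow_mul]; ring
      rw [e, norm_mul, pow_succ r (n + 1)]
      refine mul_le_mul ih ?_ (norm_nonneg _) (pow_nonneg hr0 _)
      refine (IsUltrametricDist.norm_add_le_max _ _).trans (max_le (ih.trans ?_) (le_max_right _ _))
      exact pow_le_of_le_one hr0 hr1.le (by omega)
  have hxn : ‖x‖ = 1 := by
    have := IsUltrametricDist.norm_add_le_max (x - 1) 1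
    have h' := ultra_sub_le_max x (x - 1)
    simp only [sub_add_cancel, sub_sub_cancel, norm_one] at this h'
    apply le_antisymm
    · exact this.trans (max_le hx.le le_rfl)
    · by_contra hlt
      push Not at hlt
      exact absurd (h'.trans_lt (max_lt hlt hx)) (lt_irrefl _)
  have hx0 : x ≠ 0 := by rintro rfl; simp at hxn
  have hcomp : IsCompact ((fun y : M => y ^ 3) '' Metric.sphere 0 1) :=
    (isCompact_sphere (0 : M) 1).image (by fun_prop)
  have hk : ∀ n : ℕ, ∃ k : ℕ, 4 ^ n = 3 * k + 1 := by
    intro n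
    induction n with
    | zero => exact ⟨0, rfl⟩
    | succ n ih => obtain ⟨k, hk⟩ := ih; exact ⟨4 * k + 1, by rw [pow_succ, hk]; ring⟩
  choose k hk using hk
  have hlim0 : Filter.Tendsto (fun n : ℕ => x ^ (4 ^ n)) Filter.atTop (nhds 1) := by
    rw [tendsto_iff_norm_sub_tendsto_zero]
    have hz : Filter.Tendsto (fun n : ℕ => r ^ n) Filter.atTop (nhds 0) :=
      tendsto_pow_atTop_nhds_zero_of_lt_one hr0 hr1
    refine squeeze_zero (fun _ => norm_nonneg _) (fun n => ?_) hz
    have := hpow (2 * n)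
    rw [pow_mul] at this
    exact this.trans (pow_le_pow_of_le_one hr0 hr1.le (by omega))
  have hlim : Filter.Tendsto (fun n : ℕ => ((x⁻¹) ^ (k n)) ^ 3) Filter.atTop (nhds x) := by
    have h := (hlim0.inv₀ one_ne_zero).const_mul x
    simp only [inv_one, mul_one] at h
    refine h.congr (fun n => ?_)
    rw [hk n, ← pow_mul, pow_succ, mul_comm (k n) 3, inv_pow]
    field_simp
  have hmem := hcomp.isClosed.mem_of_tendsto hlim (Filter.Eventually.of_forall (fun n =>
    ⟨(x⁻¹) ^ (k n), by simp [hxn], rfl⟩))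
  obtain ⟨c, -, hc⟩ := hmem
  exact ⟨c, hc⟩

lemma normed_cube {M : Type*} [NormedField M] [IsUltrametricDist M] [ProperSpace M]
    (h2 : ‖(2 : M)‖ < 1) (σ : M →+* M) (hσ : ∀ x, ‖σ x‖ = ‖x‖) (ζ : M)
    (hζ : 1 + ζ + ζ ^ 2 = 0) (hσζ : σ ζ = ζ) (u : M) (hu : ‖u‖ = 1) (hσu : σ u * u = 1) :
    ∃ c : M, c ^ 3 = u := by
  let O := (NormedField.valuation (K := M)).valuationSubring
  have hO : ∀ x : M, x ∈ O ↔ ‖x‖ ≤ 1 := fun x => by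
    rw [Valuation.mem_valuationSubring_iff, NormedField.valuation_apply, ← NNReal.coe_le_coe]
    simp
  have hζ3 : ζ ^ 3 = 1 := by linear_combination (ζ - 1) * hζ
  have hζn : ‖ζ‖ = 1 := by
    have : ‖ζ‖ ^ 3 = 1 := by rw [← norm_pow, hζ3, norm_one]
    exact (pow_eq_one_iff_of_nonneg (norm_nonneg _) (by norm_num)).mp this
  have hunit : ∀ x : O, IsUnit x ↔ ‖(x : M)‖ = 1 := by
    intro x
    constructor
    · rintro ⟨v, rfl⟩
      have h1 := (hO _).mp (v : O).2
      have h2 := (hO _).mp ((v⁻¹ : Oˣ) : O).2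
      have h3 : ((v : O) : M) * (((v⁻¹ : Oˣ) : O) : M) = 1 := by
        have := v.mul_inv
        exact_mod_cast congrArg (Subtype.val) this
      have h4 := congrArg norm h3
      rw [norm_mul, norm_one] at h4
      nlinarith [norm_nonneg ((v : O) : M)]
    · intro h
      have hx0 : (x : M) ≠ 0 := by intro h0; rw [h0] at h; simp at h
      refine IsUnit.of_mul_eq_one ⟨(x : M)⁻¹, (hO _).mpr (by rw [norm_inv, h, inv_one])⟩ ?_
      ext; simp [hx0]
  have hres0 : ∀ x : O, IsLocalRing.residue O x = 0 ↔ ‖(x : M)‖ < 1 := by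
    intro x
    rw [IsLocalRing.residue_eq_zero_iff, IsLocalRing.mem_maximalIdeal, mem_nonunits_iff, hunit]
    have := (hO _).mp x.2
    constructor
    · intro h; exact lt_of_le_of_ne this h
    · intro h; exact h.ne
  let s : O →+* O := σ.restrict O O (fun x hx => (hO _).mpr (by rw [hσ]; exact (hO _).mp hx))
  have hs : ∀ x : O, ((s x : O) : M) = σ x := fun x => rfl
  have : IsLocalHom s := ⟨fun x hx => by
    rw [hunit] at hx ⊢; rwa [hs, hσ] at hx⟩
  have : Finite (IsLocalRing.ResidueField O) := by
    obtain ⟨t, -, htf, ht⟩ := (isCompact_closedBall (0 : M) 1).finite_cover_balls one_pos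
    have : Finite t := htf
    choose f hf using fun x : O => (by
      have hx := ht (by simpa using (hO _).mp x.2 : (x : M) ∈ Metric.closedBall (0 : M) 1)
      simpa using hx : ∃ y ∈ t, dist (x : M) y < 1)
    let g : IsLocalRing.ResidueField O → t := fun c =>
      ⟨f (IsLocalRing.residue_surjective c).choose, (hf _).1⟩
    refine Finite.of_injective g (fun c c' h => ?_)
    have h' : f (IsLocalRing.residue_surjective c).choose =
      f (IsLocalRing.residue_surjective c').choose := congrArg Subtype.val h
    rw [← (IsLocalRing.residue_surjective c).choose_spec,
      ← (IsLocalRing.residue_surjective c').choose_spec, ← sub_eq_zero, ← map_sub, hres0]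
    have h1 := (hf (IsLocalRing.residue_surjective c).choose).2
    have h2 := (hf (IsLocalRing.residue_surjective c').choose).2
    rw [← h', dist_comm] at h2
    have h3 := (dist_triangle_max _ _ _).trans_lt (max_lt h1 h2)
    rw [dist_eq_norm] at h3
    exact h3
  let ζ' : O := ⟨ζ, (hO _).mpr hζn.le⟩
  let u' : O := ⟨u, (hO _).mpr hu.le⟩
  have htwo : (2 : IsLocalRing.ResidueField O) = 0 := by
    have := (hres0 2).mpr h2
    rwa [map_ofNat] at this
  have hζ' : 1 + ζ' + ζ' ^ 2 = 0 := by ext; simpa using hζ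
  have hζr := congrArg (IsLocalRing.residue O) hζ'
  simp only [map_add, map_one, map_pow, map_zero] at hζr
  obtain ⟨c, hc⟩ := finfield_cube (IsLocalRing.ResidueField.map s) (IsLocalRing.residue O ζ')
    (IsLocalRing.residue O u') (by linear_combination (IsLocalRing.residue O ζ' - 1) * hζr)
    (by
      intro h; rw [h] at hζr
      apply one_ne_zero (α := IsLocalRing.ResidueField O)
      linear_combination hζr - htwo)
    (by
      rw [IsLocalRing.ResidueField.map_residue]; congr 1; ext; rw [hs]; exact hσζ)
    (by
      rw [IsLocalRing.ResidueField.map_residue, ← map_mul, ← map_one (IsLocalRing.residue O)]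
      congr 1; ext; exact hσu)
  obtain ⟨d, rfl⟩ := IsLocalRing.residue_surjective c
  rw [← map_pow, ← sub_eq_zero, ← map_sub, hres0] at hc
  have hd1 : ‖(d : M)‖ = 1 := by
    rw [← hunit]
    by_contra hd
    have hd' : ‖(d : M)‖ < 1 := lt_of_le_of_ne ((hO _).mp d.2) (fun h => hd ((hunit d).mpr h))
    have h3 : ‖(d : M) ^ 3‖ < 1 := by
      rw [norm_pow]; exact pow_lt_one₀ (norm_nonneg _) hd' (by norm_num)
    have hc' : ‖(d : M) ^ 3 - u‖ < 1 := by simpa using! hc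
    have := ultra_sub_le_max ((d : M) ^ 3) ((d : M) ^ 3 - u)
    rw [sub_sub_cancel, hu] at this
    exact absurd (this.trans_lt (max_lt h3 hc')) (lt_irrefl _)
  have hd0 : (d : M) ≠ 0 := by intro h0; rw [h0] at hd1; simp at hd1
  obtain ⟨e, he⟩ := one_add_cube h2 (u / (d : M) ^ 3) (by
    have : u / (d : M) ^ 3 - 1 = -((d : M) ^ 3 - u) / (d : M) ^ 3 := by field_simp; ring
    rw [this, norm_div, norm_neg, norm_pow, hd1, one_pow, div_one]
    simpa using! hc)
  exact ⟨e * d, by rw [mul_pow, he]; field_simp⟩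

lemma local_cube (M : Type*) [Field M] [Algebra ℚ_[2] M] [FiniteDimensional ℚ_[2] M]
    (σ : M ≃ₐ[ℚ_[2]] M) (ζ : M) (hζ : 1 + ζ + ζ ^ 2 = 0) (hσζ : σ ζ = ζ)
    (a : M) (ha : a ≠ 0) (hσ2 : σ (σ a) = a) :
    ∃ c : M, c ^ 3 = σ a / a := by
  let : NormedField M := spectralNorm.normedField ℚ_[2] M
  let : NormedAlgebra ℚ_[2] M := spectralNorm.normedAlgebra ℚ_[2] M
  have : IsUltrametricDist M := IsUltrametricDist.isUltrametricDist_of_isNonarchimedean_norm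
    (isNonarchimedean_spectralNorm (K := ℚ_[2]) (L := M))
  have : ProperSpace M := FiniteDimensional.proper ℚ_[2] M
  have hσn : ∀ x, ‖σ x‖ = ‖x‖ := fun x => (spectralNorm_eq_of_equiv σ x).symm
  have hσa : σ a ≠ 0 := by simpa using ha
  have h2 : ‖(2 : M)‖ < 1 := by
    have h : ‖algebraMap ℚ_[2] M 2‖ = ‖(2 : ℚ_[2])‖ := norm_algebraMap' M 2
    rw [map_ofNat] at h
    rw [h]
    exact_mod_cast Padic.norm_p_lt_one (p := 2)
  exact normed_cube h2 (σ : M →+* M) hσn ζ hζ hσζ (σ a / a)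
    (by rw [norm_div, hσn, div_self (norm_ne_zero_iff.mpr ha)])
    (by
      change σ (σ a / a) * (σ a / a) = 1
      rw [map_div₀, hσ2]; field_simp)

def chi (τ : Equiv.Perm (Fin 4)) : ZMod 3 := (((τ 0).val ^^^ (τ 1).val : ℕ) : ZMod 3) - 1

set_option maxRecDepth 100000 in
lemma chi_mul : ∀ τ ρ : Equiv.Perm (Fin 4), Equiv.Perm.sign τ = 1 → Equiv.Perm.sign ρ = 1 →
    chi (τ * ρ) = chi τ + chi ρ := by decide

set_option maxRecDepth 100000 in
lemma chi_conj : ∀ τ : Equiv.Perm (Fin 4), Equiv.Perm.sign τ = 1 →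
    chi (Equiv.swap 0 1 * τ * Equiv.swap 0 1) = - chi τ := by decide
set_option maxRecDepth 100000 in
lemma chi_ne : ∃ τ : Equiv.Perm (Fin 4), Equiv.Perm.sign τ = 1 ∧ chi τ ≠ 0 := by decide

lemma local_cube' (F M : Type*) [Field F] [Algebra ℚ_[2] F] [FiniteDimensional ℚ_[2] F]
    [Field M] [Algebra F M] [FiniteDimensional F M]
    (σ : M ≃ₐ[F] M) (ζ : F) (hζ : 1 + ζ + ζ ^ 2 = 0)
    (a : M) (ha : a ≠ 0) (hσ2 : σ (σ a) = a) :
    ∃ c : M, c ^ 3 = σ a / a := by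
  let : Algebra ℚ_[2] M := ((algebraMap F M).comp (algebraMap ℚ_[2] F)).toAlgebra
  have : IsScalarTower ℚ_[2] F M := IsScalarTower.of_algebraMap_eq (fun _ => rfl)
  have : FiniteDimensional ℚ_[2] M := FiniteDimensional.trans ℚ_[2] F M
  refine local_cube M (σ.restrictScalars ℚ_[2]) (algebraMap F M ζ) ?_ ?_ a ha hσ2
  · have := congrArg (algebraMap F M) hζ
    simpa using this
  · simp

lemma no_S4 (F K : Type*) [Field F] [Algebra ℚ_[2] F] [FiniteDimensional ℚ_[2] F]
    (ζ : F) (hζp : IsPrimitiveRoot ζ 3)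
    [Field K] [Algebra F K] [FiniteDimensional F K] [IsGalois F K]
    (φ : (K ≃ₐ[F] K) ≃* Equiv.Perm (Fin 4)) : False := by
  have hζ3 : ζ ^ 3 = 1 := hζp.pow_eq_one
  have hζ1 : ζ ≠ 1 := hζp.ne_one (by norm_num)
  have hζ0 : ζ ≠ 0 := by rintro rfl; simp at hζ3
  have hζ : 1 + ζ + ζ ^ 2 = 0 := by
    have : (ζ - 1) * (1 + ζ + ζ ^ 2) = 0 := by linear_combination hζ3
    exact (mul_eq_zero.mp this).resolve_left (sub_ne_zero.mpr hζ1)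
  -- the character with values in `F`
  let w : ZMod 3 → F := fun i => ζ ^ i.val
  have hw_add : ∀ i j, w (i + j) = w i * w j := by
    intro i j
    simp only [w]
    rw [← pow_add, ZMod.val_add, ← pow_eq_pow_mod _ hζ3]
  have hw0 : w 0 = 1 := by simp [w]
  have hwne : ∀ i, w i ≠ 0 := fun i => pow_ne_zero _ hζ0
  have hw1 : ∀ i, w i = 1 → i = 0 := by
    intro i hi
    have h1 := (hζp.pow_eq_one_iff_dvd _).mp hi
    have h2 := ZMod.val_lt i
    rw [← ZMod.val_eq_zero]
    exact Nat.eq_zero_of_dvd_of_lt h1 h2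
  have hw3 : ∀ i, w i ^ 3 = 1 := fun i => by
    simp only [w]; rw [← pow_mul, mul_comm, pow_mul, hζ3, one_pow]
  let sg : (K ≃ₐ[F] K) →* ℤˣ := Equiv.Perm.sign.comp φ.toMonoidHom
  have hsg : ∀ τ, sg τ = Equiv.Perm.sign (φ τ) := fun _ => rfl
  let H : Subgroup (K ≃ₐ[F] K) := sg.ker
  have hH : ∀ τ, τ ∈ H ↔ sg τ = 1 := fun τ => MonoidHom.mem_ker
  classical
  let c : (K ≃ₐ[F] K) → F := fun τ => if sg τ = 1 then w (-chi (φ τ)) else 0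
  have hchi1 : chi 1 = 0 := by decide
  -- Dedekind independence
  obtain ⟨x, hx⟩ : ∃ x : K, ∑ τ : K ≃ₐ[F] K, algebraMap F K (c τ) * τ x ≠ 0 := by
    by_contra! hcon
    have hli := (linearIndependent_monoidHom K K).comp
      (fun τ : K ≃ₐ[F] K => ((τ : K →+* K) : K →* K)) (by
        intro τ ρ h; ext y; exact DFunLike.congr_fun h y)
    rw [Fintype.linearIndependent_iff] at hli
    have h1 := hli (fun τ => algebraMap F K (c τ)) (by
      ext y
      simpa [Finset.sum_apply, Algebra.smul_def] using hcon y) 1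
    simp [c, hchi1, hw0] at h1
  set α : K := ∑ τ : K ≃ₐ[F] K, algebraMap F K (c τ) * τ x with hα
  have hact : ∀ ρ, sg ρ = 1 → ρ α = algebraMap F K (w (chi (φ ρ))) * α := by
    intro ρ hρ
    rw [hα, map_sum, Finset.mul_sum]
    refine Fintype.sum_equiv (Equiv.mulLeft ρ) _ _ (fun τ => ?_)
    rw [map_mul, AlgEquiv.commutes, Equiv.coe_mulLeft, AlgEquiv.mul_apply, ← mul_assoc, ← map_mul]
    congr 2
    simp only [c, map_mul sg, hρ, one_mul, map_mul φ]
    split_ifs with h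
    · rw [chi_mul (φ ρ) (φ τ) hρ h, ← hw_add]; congr 1; ring
    · simp
  let σ : K ≃ₐ[F] K := φ.symm (Equiv.swap 0 1)
  have hφσ : φ σ = Equiv.swap 0 1 := φ.apply_symm_apply _
  have hσσ : σ * σ = 1 := by apply φ.injective; simp [hφσ]
  have hσσ' : ∀ y, σ (σ y) = y := fun y => by rw [← AlgEquiv.mul_apply, hσσ]; rfl
  have hactσ : ∀ ρ, sg ρ = 1 → ρ (σ α) = algebraMap F K (w (-chi (φ ρ))) * σ α := by
    intro ρ hρ
    have e : ρ (σ α) = σ ((σ * ρ * σ) α) := by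
      simp only [AlgEquiv.mul_apply, hσσ']
    have hsgc : sg (σ * ρ * σ) = 1 := by
      rw [map_mul, map_mul, hρ, mul_one, ← map_mul, hσσ, map_one]
    rw [e, hact _ hsgc, map_mul, AlgEquiv.commutes, map_mul, map_mul, hφσ, chi_conj (φ ρ) hρ]
  let M : IntermediateField F K := IntermediateField.fixedField H
  have hM : ∀ y : K, y ∈ M ↔ ∀ ρ, sg ρ = 1 → ρ y = y := by
    intro y
    rw [IntermediateField.mem_fixedField_iff]
    exact Iff.rfl
  have hMg : IsGalois F M := IsGalois.of_fixedField_normal_subgroup H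
  have haM : α ^ 3 ∈ M := by
    rw [hM]; intro ρ hρ
    rw [map_pow, hact ρ hρ, mul_pow, ← map_pow, hw3, map_one, one_mul]
  have hbM : α * σ α ∈ M := by
    rw [hM]; intro ρ hρ
    have : w (chi (φ ρ)) * w (-chi (φ ρ)) = 1 := by rw [← hw_add, add_neg_cancel, hw0]
    rw [map_mul, hact ρ hρ, hactσ ρ hρ, mul_mul_mul_comm, ← map_mul, this, map_one, one_mul]
  let a : M := ⟨α ^ 3, haM⟩
  have ha0 : a ≠ 0 := by
    intro h; exact pow_ne_zero 3 hx (congrArg Subtype.val h)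
  let s : M ≃ₐ[F] M := σ.restrictNormal M
  have hs : ∀ y : M, ((s y : M) : K) = σ y := fun y => AlgEquiv.restrictNormal_commutes σ M y
  obtain ⟨d, hd⟩ := local_cube' F M s ζ hζ a ha0 (by ext; rw [hs, hs, hσσ'])
  have hdK : (d : K) ^ 3 = σ α ^ 3 / α ^ 3 := by
    have := congrArg Subtype.val hd
    simpa [hs, a] using this
  have hσα : σ α ≠ 0 := by simpa using hx
  have hd0 : (d : K) ≠ 0 := by
    intro h; rw [h] at hdK
    have : σ α ^ 3 / α ^ 3 ≠ 0 := div_ne_zero (pow_ne_zero _ hσα) (pow_ne_zero _ hx)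
    apply this; rw [← hdK]; simp
  -- an element `m` of `M` with `m ^ 3 = α ^ 3`
  let m : K := α ^ 3 * d / (α * σ α)
  have hmM : m ∈ M := M.div_mem (M.mul_mem haM d.2) hbM
  have hm3 : m ^ 3 = α ^ 3 := by
    simp only [m]; rw [div_pow, mul_pow, hdK]; field_simp
  have hm0 : m ≠ 0 := by
    intro h; rw [h] at hm3
    exact pow_ne_zero 3 hx (by rw [← hm3]; simp)
  have hζK : IsPrimitiveRoot (algebraMap F K ζ) 3 :=
    hζp.map_of_injective (algebraMap F K).injective
  obtain ⟨i, -, hi⟩ := hζK.eq_pow_of_pow_eq_one (ξ := α / m)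
    (by rw [div_pow, hm3, div_self (pow_ne_zero 3 hx)])
  have hαM : α ∈ M := by
    have : α = algebraMap F K (ζ ^ i) * m := by rw [map_pow, hi]; field_simp
    rw [this]
    exact M.mul_mem (M.algebraMap_mem _) hmM
  obtain ⟨τ, hτ1, hτ2⟩ := chi_ne
  have hsτ : sg (φ.symm τ) = 1 := by rw [hsg, φ.apply_symm_apply, hτ1]
  have h1 := (hM α).mp hαM _ hsτ
  rw [hact _ hsτ, φ.apply_symm_apply] at h1
  have h2 : algebraMap F K (w (chi τ)) = algebraMap F K 1 := by
    rw [map_one]; exact mul_right_cancel₀ hx (by rw [h1, one_mul])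
  exact hτ2 (hw1 _ ((algebraMap F K).injective h2))

theorem stmt7 (F : Type*) [Field F] [Algebra ℚ_[2] F] [FiniteDimensional ℚ_[2] F]
    (hμ3 : ∃ ζ : F, IsPrimitiveRoot ζ 3) :
    nu F (Equiv.Perm (Fin 4)) = 0 := by
  obtain ⟨ζ, hζ⟩ := hμ3
  unfold nu
  have : IsEmpty {K : IntermediateField F (AlgebraicClosure F) //
      FiniteDimensional F K ∧ IsGalois F K ∧ Nonempty ((K ≃ₐ[F] K) ≃* Equiv.Perm (Fin 4))} := by
    refine ⟨?_⟩
    rintro ⟨K, hfd, hgal, ⟨φ⟩⟩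
    exact no_S4 F K ζ hζ φ
  exact Nat.card_of_isEmpty
end

section
/- Let F be a finite extension of ℚ₂ of degree m, residue degree f, that does not contain a primitive cube root of unity, and suppose it is NOT the case that (F does not contain a primitive fourth root of unity, m is even and f = 1). Then the number of Galois extensions of F with Galois group isomorphic to the symmetric group S₄ is ν(F,S₄) = 2^{2m} − 1. -/
open Polynomial IntermediateField
set_option linter.unusedSectionVars false
set_option linter.unusedSimpArgs false
set_option linter.style.longLine false
set_option linter.style.haveILetI false


lemma herb {A G : Type*} [CommGroup A] [CommGroup G] (φ : G →* A) (inj : Function.Injective φ)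
    (fin : φ.range.index ≠ 0) (p : ℕ) :
    (powMonoidHom p : A →* A).range.index =
      (powMonoidHom p : G →* G).range.index * φ.range.relIndex (powMonoidHom p : A →* A).ker := by
  have h1 := Subgroup.index_map φ.range (powMonoidHom p : A →* A)
  have h2 : φ.range.map (powMonoidHom p : A →* A) = (powMonoidHom p : G →* G).range.map φ := by
    ext x
    simp [Subgroup.mem_map]
  rw [h2, Subgroup.index_map_of_injective _ inj] at h1
  have h3 : φ.range.relIndex (powMonoidHom p : A →* A).ker * (φ.range ⊔ (powMonoidHom p : A →* A).ker).index = φ.range.index := by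
    rw [← Subgroup.relIndex_sup_left, Subgroup.relIndex_mul_index le_sup_left]
  have h4 : (φ.range ⊔ (powMonoidHom p : A →* A).ker).index ≠ 0 := by
    intro h; rw [h] at h3; simp at h3; exact fin h3.symm
  rw [← h3] at h1
  apply mul_left_cancel₀ h4
  rw [← h1]; ring

section normed
variable (E : Type*) [NormedField E] [NormedAlgebra ℚ_[2] E] [FiniteDimensional ℚ_[2] E]
  [IsUltrametricDist E]

/-- closed ball of radius `2^(-k)` as an additive subgroup -/
def cball (k : ℕ) : AddSubgroup E where
  carrier := {x | ‖x‖ ≤ (1 / 2) ^ k}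
  zero_mem' := by simp
  add_mem' {x y} hx hy := (IsUltrametricDist.norm_add_le_max x y).trans (max_le hx hy)
  neg_mem' {x} hx := by simpa using hx

variable {E}
@[simp] lemma mem_cball {k : ℕ} {x : E} : x ∈ cball E k ↔ ‖x‖ ≤ (1 / 2) ^ k := Iff.rfl

lemma norm_two_E : ‖(2 : E)‖ = 1 / 2 := by
  have h : (2 : E) = algebraMap ℚ_[2] E ((2 : ℕ) : ℚ_[2]) := by rw [map_natCast]; norm_num
  rw [h, norm_algebraMap', Padic.norm_p]; norm_num

lemma isOpen_cball (k : ℕ) : IsOpen (cball E k : Set E) := by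
  have : (cball E k : Set E) = Metric.closedBall 0 ((1 / 2) ^ k) := by
    ext x; simp
  rw [this]
  exact IsUltrametricDist.isOpen_closedBall _ (by positivity)

lemma compact_cball (k : ℕ) : CompactSpace (cball E k) := by
  have : (cball E k : Set E) = Metric.closedBall 0 ((1 / 2) ^ k) := by
    ext x; simp
  have hp := FiniteDimensional.proper ℚ_[2] E
  apply isCompact_iff_compactSpace.mp
  rw [this]
  exact isCompact_closedBall _ _

lemma finite_quot (H : AddSubgroup E) (hH : IsOpen (H : Set E)) (k : ℕ) :
    Finite (cball E k ⧸ H.addSubgroupOf (cball E k)) := by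
  have := compact_cball (E := E) k
  exact AddSubgroup.quotient_finite_of_isOpen _ (hH.preimage continuous_subtype_val)

lemma index_padicInt (n : ℕ) : 
    (powMonoidHom 2 : Multiplicative (Fin n → ℤ_[2]) →* _).range.index = 2 ^ n := by
  let f : (Fin n → ℤ_[2]) →+ (Fin n → ZMod 2) :=
    { toFun := fun v i => PadicInt.toZMod (v i)
      map_zero' := by ext; simp
      map_add' := fun x y => by ext; simp }
  have hf : (powMonoidHom 2 : Multiplicative (Fin n → ℤ_[2]) →* _).range = (AddMonoidHom.toMultiplicative f).ker := by
    ext x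
    have h0 : ∀ z : ℤ_[2], PadicInt.toZMod z = 0 ↔ ∃ w, w + w = z := by
      intro z
      rw [← RingHom.mem_ker, PadicInt.ker_toZMod, PadicInt.maximalIdeal_eq_span_p, Ideal.mem_span_singleton]
      constructor
      · rintro ⟨w, rfl⟩; exact ⟨w, by push_cast; ring⟩
      · rintro ⟨w, rfl⟩; exact ⟨w, by push_cast; ring⟩
    rw [MonoidHom.mem_ker, MonoidHom.mem_range]
    constructor
    · rintro ⟨y, rfl⟩
      apply Multiplicative.toAdd.injective
      ext i
      exact (h0 _).2 ⟨y.toAdd i, by simp [two_mul]⟩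
    · intro h
      have h' : ∀ i, PadicInt.toZMod (x.toAdd i) = 0 := fun i => congr_fun (congr_arg Multiplicative.toAdd h) i
      choose w hw using fun i => (h0 _).1 (h' i)
      refine ⟨Multiplicative.ofAdd w, ?_⟩
      apply Multiplicative.toAdd.injective
      ext i
      simp [two_mul, ← hw i]
  rw [hf, Subgroup.index_ker]
  have hs : Function.Surjective (AddMonoidHom.toMultiplicative f) := by
    intro y
    choose w hw using fun i => (ZMod.ringHom_surjective (PadicInt.toZMod (p := 2))) (y.toAdd i)
    refine ⟨Multiplicative.ofAdd w, ?_⟩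
    apply Multiplicative.toAdd.injective
    ext i
    exact hw i
  rw [MonoidHom.range_eq_top.2 hs]
  simp [Nat.card_eq_fintype_card]

lemma index_ball : (powMonoidHom 2 : Multiplicative (cball E 0) →* _).range.index = 2 ^ (Module.finrank ℚ_[2] E) := by
  classical
  set n := Module.finrank ℚ_[2] E
  let b₀ : Module.Basis (Fin n) ℚ_[2] E := Module.finBasis ℚ_[2] E
  -- scaling
  have hsc : ∀ i, ∃ k : ℕ, ‖(2 : E) ^ k * b₀ i‖ ≤ 1 := by
    intro i
    obtain ⟨k, hk⟩ := exists_pow_lt_of_lt_one (show 0 < (‖b₀ i‖ + 1)⁻¹ by positivity) (show (1 / 2 : ℝ) < 1 by norm_num)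
    refine ⟨k, ?_⟩
    rw [norm_mul, norm_pow, norm_two_E]
    have h1 : 0 < ‖b₀ i‖ + 1 := by positivity
    rw [lt_inv_comm₀ (by positivity) h1] at hk
    have h2 : 0 < (1 / 2 : ℝ) ^ k := by positivity
    calc (1 / 2 : ℝ) ^ k * ‖b₀ i‖ ≤ (1 / 2 : ℝ) ^ k * ((1 / 2 : ℝ) ^ k)⁻¹ := by gcongr; linarith
      _ = 1 := mul_inv_cancel₀ h2.ne'
  choose k hk using hsc
  let b : Module.Basis (Fin n) ℚ_[2] E := b₀.unitsSMul (fun i => (Units.mk0 (2 : ℚ_[2]) two_ne_zero) ^ (k i))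
  have hb : ∀ i, ‖b i‖ ≤ 1 := by
    intro i
    have : b i = (2 : E) ^ k i * b₀ i := by
      have h2 : algebraMap ℚ_[2] E 2 = 2 := map_ofNat _ 2
      simp [b, Module.Basis.unitsSMul_apply, Units.smul_def, Algebra.smul_def, h2]
    rw [this]; exact hk i
  let φ₀ : (Fin n → ℤ_[2]) →+ E :=
    { toFun := fun v => ∑ i, (v i : ℚ_[2]) • b i
      map_zero' := by simp
      map_add' := fun x y => by simp [add_smul, Finset.sum_add_distrib] }
  have hφ₀ : ∀ v, φ₀ v ∈ cball E 0 := by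
    intro v
    refine AddSubgroup.sum_mem (cball E 0) (t := Finset.univ) (f := fun i => (v i : ℚ_[2]) • b i) ?_
    intro i _
    simp only [mem_cball, pow_zero]
    rw [norm_smul]
    exact mul_le_one₀ (PadicInt.norm_le_one _) (norm_nonneg _) (hb i)
  let φ : (Fin n → ℤ_[2]) →+ cball E 0 := φ₀.codRestrict _ hφ₀
  have hinj : Function.Injective φ := by
    intro v w h
    have h' : φ₀ v = φ₀ w := congr_arg Subtype.val h
    have h1 : ∀ v : Fin n → ℤ_[2], ∀ i, b.repr (φ₀ v) i = v i := by
      intro v i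
      exact b.repr_sum_self (fun i => (v i : ℚ_[2])) ▸ rfl
    funext i
    apply Subtype.ext
    rw [← h1, ← h1, h']
  have hop : IsOpen (φ₀.range : Set E) := by
    have : (φ₀.range : Set E) = ⋂ i, (b.coord i) ⁻¹' (Metric.closedBall 0 1) := by
      ext x
      simp only [Set.mem_iInter, Set.mem_preimage, mem_closedBall_zero_iff]
      constructor
      · rintro ⟨v, rfl⟩ i
        have := b.repr_sum_self (fun i => (v i : ℚ_[2]))
        have h3 : b.coord i (φ₀ v) = v i := congr_fun this i
        rw [h3]
        exact PadicInt.norm_le_one _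
      · intro h
        refine ⟨fun i => ⟨b.coord i x, h i⟩, ?_⟩
        exact b.sum_repr x
    rw [this]
    apply isOpen_iInter_of_finite
    intro i
    exact (IsUltrametricDist.isOpen_closedBall _ one_ne_zero).preimage (LinearMap.continuous_of_finiteDimensional (b.coord i))
  have := compact_cball (E := E) 0
  have hop2 : IsOpen ((AddMonoidHom.toMultiplicative φ).range : Set (Multiplicative (cball E 0))) := by
    have h3 : IsOpen ((φ₀.range.addSubgroupOf (cball E 0) : AddSubgroup (cball E 0)) : Set (cball E 0)) := hop.preimage continuous_subtype_val
    suffices h4 : ((AddMonoidHom.toMultiplicative φ).range : Set (Multiplicative (cball E 0))) = Multiplicative.toAdd ⁻¹' ((φ₀.range.addSubgroupOf (cball E 0) : AddSubgroup (cball E 0)) : Set (cball E 0)) by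
      rw [h4]; exact h3.preimage continuous_toAdd
    ext x
    constructor
    · rintro ⟨v, rfl⟩
      exact ⟨v.toAdd, rfl⟩
    · rintro ⟨v, hv⟩
      exact ⟨Multiplicative.ofAdd v, Subtype.ext hv⟩
  have hfin := Subgroup.quotient_finite_of_isOpen _ hop2
  have := herb (AddMonoidHom.toMultiplicative φ) (by intro x y h; exact hinj h) (
    Subgroup.index_ne_zero_of_finite) 2
  rw [this, index_padicInt]
  have hk : (powMonoidHom 2 : Multiplicative (cball E 0) →* _).ker = ⊥ := by
    rw [eq_bot_iff]
    intro x hx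
    have h3 : (x.toAdd : E) + x.toAdd = 0 := by
      have := congr_arg (fun y => ((Multiplicative.toAdd y : cball E 0) : E)) hx
      simpa [two_mul] using this
    have h2 : (2 : E) ≠ 0 := by
      intro h; have := norm_two_E (E := E); rw [h] at this; norm_num at this
    rw [← two_mul] at h3
    have h4 := (mul_eq_zero.1 h3).resolve_left h2
    exact Multiplicative.toAdd.injective (Subtype.ext h4)
  rw [hk, Subgroup.relIndex_bot_right, mul_one]

lemma norm_le_cball (x : cball E 0) : ‖(x : E)‖ ≤ 1 := by
  have := x.2; rwa [mem_cball, pow_zero] at this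

lemma solve (z : E) (hz : ‖z‖ ≤ 1) (p : E → E) (h1 : ∀ x, ‖x‖ ≤ 1 → ‖p x‖ ≤ 1)
    (h2 : ∀ x y, ‖x‖ ≤ 1 → ‖y‖ ≤ 1 → ‖p x - p y‖ ≤ ‖x - y‖) [CompleteSpace E] :
    ∃ y, ‖y‖ ≤ 1 ∧ y + 2 * p y = z := by
  have hc : IsClosed (cball E 0 : Set E) := by
    have : (cball E 0 : Set E) = Metric.closedBall 0 1 := by
      ext x; simp
    rw [this]; exact Metric.isClosed_closedBall
  have : CompleteSpace (cball E 0) := hc.completeSpace_coe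
  have hm : ∀ x : cball E 0, z - 2 * p x ∈ cball E 0 := by
    intro x
    apply AddSubgroup.sub_mem
    · simpa using hz
    · have hx := h1 x (norm_le_cball x)
      simp only [mem_cball, pow_zero, norm_mul, norm_two_E]
      linarith
  let f : cball E 0 → cball E 0 := fun x => ⟨z - 2 * p x, hm x⟩
  have hf : ContractingWith (1 / 2) f := by
    refine ⟨by rw [← NNReal.coe_lt_coe]; norm_num, ?_⟩
    apply LipschitzWith.of_dist_le_mul
    intro x y
    have hx : ‖(x : E)‖ ≤ 1 := norm_le_cball x
    have hy : ‖(y : E)‖ ≤ 1 := norm_le_cball y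
    rw [Subtype.dist_eq, Subtype.dist_eq, dist_eq_norm, dist_eq_norm]
    have : z - 2 * p x - (z - 2 * p y) = - (2 * (p x - p y)) := by ring
    simp only [f]
    rw [this, norm_neg, norm_mul, norm_two_E]
    have := h2 x y hx hy
    push_cast
    linarith
  have hfix := hf.fixedPoint_isFixedPt
  set y := ContractingWith.fixedPoint f hf
  refine ⟨y, norm_le_cball y, ?_⟩
  have h3 : z - 2 * p y = y := congr_arg Subtype.val hfix
  linear_combination -h3

lemma two_ne_E : (2 : E) ≠ 0 := by
  intro h; have := norm_two_E (E := E); rw [h] at this; norm_num at this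

lemma norm_four_E : ‖(4 : E)‖ = 1 / 4 := by
  have : (4 : E) = 2 * 2 := by norm_num
  rw [this, norm_mul, norm_two_E]; norm_num

lemma norm_eq_one_of {x : E} (h : ‖x - 1‖ ≤ 1 / 4) : ‖x‖ = 1 := by
  have h1 : ‖x‖ = ‖(x - 1) + 1‖ := by congr 1; ring
  rw [h1, IsUltrametricDist.norm_add_eq_max_of_norm_ne_norm]
  · rw [norm_one, max_eq_right]; linarith
  · rw [norm_one]; intro h'; linarith

variable (E) in
/-- the unit group `1 + 4 O` -/
def Ug : Subgroup Eˣ where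
  carrier := {u | ‖(u : E) - 1‖ ≤ 1 / 4}
  one_mem' := by simp
  mul_mem' {u v} hu hv := by
    have h : ((u * v : Eˣ) : E) - 1 = u * (v - 1) + (u - 1) := by push_cast; ring
    simp only [Set.mem_ofPred_eq] at *
    rw [h]
    refine (IsUltrametricDist.norm_add_le_max _ _).trans (max_le ?_ hu)
    rw [norm_mul, norm_eq_one_of hu, one_mul]; exact hv
  inv_mem' {u} hu := by
    simp only [Set.mem_ofPred_eq] at *
    have h : ((u⁻¹ : Eˣ) : E) - 1 = - (u⁻¹ : Eˣ) * (u - 1) := by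
      rw [mul_sub]; simp; ring
    rw [h, norm_mul, norm_neg, Units.val_inv_eq_inv_val, norm_inv, norm_eq_one_of hu]
    simpa using hu

lemma mem_Ug {u : Eˣ} : u ∈ Ug E ↔ ‖(u : E) - 1‖ ≤ 1 / 4 := Iff.rfl

variable (E) in
/-- the map `ℤ × (1 + 4O) → Eˣ` -/
noncomputable def phiE : Multiplicative ℤ × Ug E →* Eˣ :=
  (zpowersHom Eˣ (Units.mk0 2 two_ne_E)).coprod (Ug E).subtype

lemma phiE_apply (k : Multiplicative ℤ) (u : Ug E) : ((phiE E (k, u) : Eˣ) : E) = 2 ^ k.toAdd * (u : Eˣ) := by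
  simp [phiE, zpowersHom_apply]

lemma norm_phiE (k : Multiplicative ℤ) (u : Ug E) : ‖((phiE E (k, u) : Eˣ) : E)‖ = (1 / 2) ^ k.toAdd := by
  rw [phiE_apply, norm_mul, norm_eq_one_of u.2, norm_zpow, norm_two_E, mul_one]

lemma phiE_inj : Function.Injective (phiE E) := by
  rw [injective_iff_map_eq_one]
  rintro ⟨k, u⟩ h
  have h1 := norm_phiE k u
  rw [h] at h1
  have hk : k.toAdd = 0 := by
    rw [Units.val_one, norm_one] at h1
    by_contra hk
    have := zpow_right_injective₀ (show (0:ℝ) < 1/2 by norm_num) (by norm_num) (h1.symm.trans (zpow_zero _).symm)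
    exact hk this
  have hk' : k = 1 := Multiplicative.toAdd.injective hk
  subst hk'
  ext
  · rfl
  · have := phiE_apply (1 : Multiplicative ℤ) u
    rw [h] at this
    simp at this
    simp [← this]

lemma phiE_index : (phiE E).range.index ≠ 0 := by
  have hfin := finite_quot (cball E 3) (isOpen_cball 3) 0
  have key : ∀ x : Eˣ, ∃ y : Eˣ, (QuotientGroup.mk x : Eˣ ⧸ (phiE E).range) = QuotientGroup.mk y ∧ ‖(y : E)‖ ≤ 1 ∧ 1 / 2 < ‖(y : E)‖ := by
    intro x
    obtain ⟨k, hk1, hk2⟩ := exists_mem_Ioc_zpow (x := ‖(x : E)‖) (y := 2) (norm_pos_iff.2 x.ne_zero) (by norm_num)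
    refine ⟨x * phiE E (Multiplicative.ofAdd (k + 1), 1), ?_, ?_⟩
    · rw [QuotientGroup.eq]
      exact ⟨_, by rw [inv_mul_cancel_left]⟩
    · rw [Units.val_mul, norm_mul, norm_phiE, toAdd_ofAdd, one_div, inv_zpow, ← div_eq_mul_inv]
      have h2 : (0 : ℝ) < 2 ^ (k + 1) := by positivity
      rw [div_le_one h2, lt_div_iff₀ h2]
      refine ⟨hk2, ?_⟩
      rw [zpow_add_one₀ (by norm_num)]
      linarith
  choose f hf1 hf2 hf3 using key
  let g : Eˣ ⧸ (phiE E).range → cball E 0 ⧸ (cball E 3).addSubgroupOf (cball E 0) :=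
    fun q => QuotientAddGroup.mk ⟨(f q.out : E), by simpa using hf2 _⟩
  have hg : Function.Injective g := by
    intro q1 q2 h
    rw [QuotientAddGroup.eq] at h
    rw [AddSubgroup.mem_addSubgroupOf] at h
    have h' : ‖-(f q1.out : E) + f q2.out‖ ≤ (1 / 2) ^ 3 := h
    rw [← q1.out_eq', ← q2.out_eq']
    change (QuotientGroup.mk q1.out : Eˣ ⧸ (phiE E).range) = QuotientGroup.mk q2.out
    rw [hf1 q1.out, hf1 q2.out, QuotientGroup.eq]
    have hu : (f q1.out)⁻¹ * f q2.out ∈ Ug E := by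
      rw [mem_Ug]
      have h3 : (((f q1.out)⁻¹ * f q2.out : Eˣ) : E) - 1 = (f q1.out : E)⁻¹ * (-(f q1.out : E) + f q2.out) := by
        have := (f q1.out).ne_zero
        push_cast
        field_simp
        ring
      rw [h3, norm_mul, norm_inv]
      have h4 := hf3 q1.out
      calc _ ≤ (2 : ℝ) * (1 / 2) ^ 3 := by
            gcongr
            rw [inv_le_comm₀ (by linarith) (by norm_num)]; linarith
        _ = 1 / 4 := by norm_num
    exact ⟨(1, ⟨_, hu⟩), by ext; rw [phiE_apply]; simp⟩
  have : Finite (Eˣ ⧸ (phiE E).range) := Finite.of_injective g hg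
  exact Subgroup.index_ne_zero_of_finite

lemma index_int (p : ℕ) : (powMonoidHom p : Multiplicative ℤ →* _).range.index = p := by
  have : (powMonoidHom p : Multiplicative ℤ →* _).range = AddSubgroup.toSubgroup (AddSubgroup.zmultiples (p : ℤ)) := by
    ext x
    constructor
    · rintro ⟨y, rfl⟩
      exact ⟨y.toAdd, by simp [mul_comm]⟩
    · rintro ⟨y, hy⟩
      refine ⟨Multiplicative.ofAdd y, ?_⟩
      apply Multiplicative.toAdd.injective
      simp only [powMonoidHom_apply, toAdd_pow, toAdd_ofAdd]
      rw [← hy]; simp [mul_comm]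
  rw [this, AddSubgroup.index_toSubgroup, Int.index_zmultiples]
  simp

lemma index_G (p : ℕ) : (powMonoidHom p : Multiplicative ℤ × Ug E →* _).range.index = p * (powMonoidHom p : Ug E →* _).range.index := by
  have : (powMonoidHom p : Multiplicative ℤ × Ug E →* _).range = Subgroup.prod (powMonoidHom p : Multiplicative ℤ →* _).range (powMonoidHom p : Ug E →* _).range := by
    ext ⟨x, y⟩
    simp only [MonoidHom.mem_range, Subgroup.mem_prod, Prod.exists, powMonoidHom_apply, Prod.pow_mk, Prod.mk.injEq]
    constructor
    · rintro ⟨a, b, h1, h2⟩; exact ⟨⟨a, h1⟩, ⟨b, h2⟩⟩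
    · rintro ⟨⟨a, h1⟩, ⟨b, h2⟩⟩; exact ⟨a, b, h1, h2⟩
  rw [this, Subgroup.index_prod, index_int]

omit [NormedAlgebra ℚ_[2] E] [FiniteDimensional ℚ_[2] E] in
lemma one_add' {x y : E} (hx : ‖x‖ ≤ 1) (hy : ‖y‖ ≤ 1) : ‖x + y‖ ≤ 1 :=
  (IsUltrametricDist.norm_add_le_max _ _).trans (max_le hx hy)

omit [NormedAlgebra ℚ_[2] E] [FiniteDimensional ℚ_[2] E] [IsUltrametricDist E] in
lemma one_mul' {x y : E} (hx : ‖x‖ ≤ 1) (hy : ‖y‖ ≤ 1) : ‖x * y‖ ≤ 1 := by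
  rw [norm_mul]; exact mul_le_one₀ hx (norm_nonneg _) hy

lemma norm_sub_div (u : Ug E) : ‖(((u : Eˣ) : E) - 1) / 4‖ ≤ 1 := by
  have := mem_Ug.1 u.2
  rw [norm_div, norm_four_E]
  rw [div_le_one (by norm_num)]; exact this

lemma four_ne_E : (4 : E) ≠ 0 := by
  intro h; have := norm_four_E (E := E); rw [h] at this; norm_num at this

lemma exists_Ug (t : E) (ht : ‖t‖ ≤ 1) : ∃ u : Ug E, ((u : Eˣ) : E) = 1 + 4 * t := by
  have h : ‖(1 + 4 * t) - 1‖ ≤ 1 / 4 := by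
    rw [add_sub_cancel_left, norm_mul, norm_four_E]; linarith
  have h0 : 1 + 4 * t ≠ 0 := by
    intro h'; have := norm_eq_one_of h; rw [h'] at this; simp at this
  exact ⟨⟨Units.mk0 _ h0, h⟩, rfl⟩

lemma index_U3 : (powMonoidHom 3 : Ug E →* _).range.index = 1 := by
  have : CompleteSpace E := FiniteDimensional.complete ℚ_[2] E
  rw [Subgroup.index_eq_one, MonoidHom.range_eq_top]
  intro u
  have h6 : ‖(6 : E)‖ ≤ 1 := by exact_mod_cast IsUltrametricDist.norm_natCast_le_one E 6
  have h8 : ‖(8 : E)‖ ≤ 1 := by exact_mod_cast IsUltrametricDist.norm_natCast_le_one E 8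
  obtain ⟨t, ht, h⟩ := solve _ (norm_sub_div u) (fun t => t + 6 * (t * t) + 8 * (t * (t * t)))
    (fun x hx => one_add' (one_add' hx (one_mul' h6 (one_mul' hx hx))) (one_mul' h8 (one_mul' hx (one_mul' hx hx))))
    (fun x y hx hy => by
      have : x + 6 * (x * x) + 8 * (x * (x * x)) - (y + 6 * (y * y) + 8 * (y * (y * y))) =
        (1 + 6 * (x + y) + 8 * (x * x + x * y + y * y)) * (x - y) := by ring
      rw [this, norm_mul]
      apply mul_le_of_le_one_left (norm_nonneg _)
      exact one_add' (one_add' norm_one.le (one_mul' h6 (one_add' hx hy)))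
        (one_mul' h8 (one_add' (one_add' (one_mul' hx hx) (one_mul' hx hy)) (one_mul' hy hy))))
  obtain ⟨v, hv⟩ := exists_Ug t ht
  refine ⟨v, ?_⟩
  ext
  rw [powMonoidHom_apply]
  push_cast
  rw [hv]
  have h4 := four_ne_E (E := E)
  field_simp at h
  linear_combination h

/-- log map -/
noncomputable def logU : Ug E →* (Multiplicative (cball E 0)) ⧸ (powMonoidHom 2 : Multiplicative (cball E 0) →* _).range :=
  MonoidHom.mk' (fun u => QuotientGroup.mk (Multiplicative.ofAdd ⟨(((u : Eˣ) : E) - 1) / 4, by simpa using norm_sub_div u⟩))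
   (by
    intro u v
    rw [← QuotientGroup.mk_mul, eq_comm, QuotientGroup.eq]
    refine ⟨Multiplicative.ofAdd ⟨2 * (((((u : Eˣ) : E) - 1) / 4) * ((((v : Eˣ) : E) - 1) / 4)), ?_⟩, ?_⟩
    · rw [mem_cball, pow_zero]
      exact one_mul' (by rw [norm_two_E]; norm_num) (one_mul' (norm_sub_div u) (norm_sub_div v))
    · apply Multiplicative.toAdd.injective
      apply Subtype.ext
      have h4 := four_ne_E (E := E)
      simp
      field_simp
      ring)

lemma logU_apply (u : Ug E) : logU u = QuotientGroup.mk (Multiplicative.ofAdd ⟨(((u : Eˣ) : E) - 1) / 4, by simpa using norm_sub_div u⟩) := rfl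

lemma index_U2 : (powMonoidHom 2 : Ug E →* _).range.index = 2 ^ (Module.finrank ℚ_[2] E) := by
  have : CompleteSpace E := FiniteDimensional.complete ℚ_[2] E
  have h4 := four_ne_E (E := E)
  have h2 : ‖(2 : E)‖ ≤ 1 := by rw [norm_two_E]; norm_num
  have hk : (powMonoidHom 2 : Ug E →* _).range = (logU (E := E)).ker := by
    ext u
    rw [MonoidHom.mem_ker, logU_apply, QuotientGroup.eq_one_iff]
    constructor
    · rintro ⟨v, rfl⟩
      have hv := norm_sub_div v
      refine ⟨Multiplicative.ofAdd ⟨(((v : Eˣ) : E) - 1) / 4 + 2 * (((((v : Eˣ) : E) - 1) / 4) * ((((v : Eˣ) : E) - 1) / 4)), ?_⟩, ?_⟩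
      · rw [mem_cball, pow_zero]
        exact one_add' hv (one_mul' h2 (one_mul' hv hv))
      · apply Multiplicative.toAdd.injective
        apply Subtype.ext
        simp
        field_simp
        ring
    · rintro ⟨w, hw⟩
      have hw1 := congr_arg (fun y => ((Multiplicative.toAdd y : cball E 0) : E)) hw
      simp at hw1
      obtain ⟨t, ht, h⟩ := solve (w.toAdd : E) (norm_le_cball _) (fun t => t * t) (fun x hx => one_mul' hx hx)
        (fun x y hx hy => by
          have : x * x - y * y = (x + y) * (x - y) := by ring
          rw [this, norm_mul]
          exact mul_le_of_le_one_left (norm_nonneg _) (one_add' hx hy))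
      obtain ⟨v, hv⟩ := exists_Ug t ht
      refine ⟨v, ?_⟩
      ext
      rw [powMonoidHom_apply]
      push_cast
      rw [hv]
      field_simp at hw1
      rw [← h] at hw1
      linear_combination hw1
  rw [hk, Subgroup.index_ker, MonoidHom.range_eq_top (f := logU (E := E)).2]
  · rw [Subgroup.card_top]; exact index_ball
  · intro q
    obtain ⟨y, rfl⟩ := QuotientGroup.mk_surjective q
    obtain ⟨u, hu⟩ := exists_Ug (y.toAdd : E) (norm_le_cball _)
    refine ⟨u, ?_⟩
    rw [logU_apply]
    congr 1
    apply Multiplicative.toAdd.injective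
    apply Subtype.ext
    simp [hu]
    field_simp

lemma index_sq_normed : (powMonoidHom 2 : Eˣ →* _).range.index = 2 ^ (Module.finrank ℚ_[2] E + 2) := by
  rw [herb (phiE E) phiE_inj phiE_index 2, index_G, index_U2]
  have h2 := two_ne_E (E := E)
  have h1 : (1 : Eˣ) ≠ -1 := by
    intro h
    have := congr_arg (Units.val) h
    push_cast at this
    apply h2
    linear_combination this
  have hk : ∀ x : Eˣ, x ∈ (powMonoidHom 2 : Eˣ →* _).ker ↔ x = 1 ∨ x = -1 := by
    intro x
    rw [MonoidHom.mem_ker, powMonoidHom_apply]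
    rw [← Units.val_inj, ← Units.val_inj, ← Units.val_inj]
    push_cast
    exact sq_eq_one_iff
  have hbot : (phiE E).range ⊓ (powMonoidHom 2 : Eˣ →* _).ker = ⊥ := by
    rw [eq_bot_iff]
    rintro x ⟨⟨⟨k, u⟩, hx⟩, hx2⟩
    rcases (hk x).1 hx2 with h | h
    · rw [h]; exact Subgroup.one_mem _
    · exfalso
      have h3 := norm_phiE k u
      rw [hx, h] at h3
      push_cast at h3
      rw [norm_neg, norm_one] at h3
      have hk0 : k.toAdd = 0 := 
        zpow_right_injective₀ (show (0:ℝ) < 1/2 by norm_num) (by norm_num) (h3.symm.trans (zpow_zero _).symm)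
      have h4 := phiE_apply k u
      rw [hk0, hx, h, zpow_zero, one_mul] at h4
      have h5 := mem_Ug.1 u.2
      rw [← h4] at h5
      have h6 : ((-1 : Eˣ) : E) - 1 = - 2 := by push_cast; norm_num
      rw [h6, norm_neg, norm_two_E] at h5
      norm_num at h5
  rw [← Subgroup.inf_relIndex_right, hbot, Subgroup.relIndex_bot_left]
  have hset : ((powMonoidHom 2 : Eˣ →* _).ker : Set Eˣ) = {1, -1} := by
    ext x; exact hk x
  have hc : Nat.card (powMonoidHom 2 : Eˣ →* Eˣ).ker = 2 := by
    have h7 := Set.ncard_pair h1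
    rw [← hset] at h7; exact h7
  rw [hc]; ring

lemma index_cube_normed (h : ¬ ∃ ζ : E, IsPrimitiveRoot ζ 3) : (powMonoidHom 3 : Eˣ →* _).range.index = 3 := by
  rw [herb (phiE E) phiE_inj phiE_index 3, index_G, index_U3]
  have : (powMonoidHom 3 : Eˣ →* _).ker = ⊥ := by
    rw [eq_bot_iff]
    intro x hx
    by_contra hx1
    apply h
    refine ⟨x, ?_⟩
    rw [IsPrimitiveRoot.coe_units_iff]
    rw [← orderOf_eq_prime (p := 3) hx hx1]
    exact IsPrimitiveRoot.orderOf x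
  rw [this]; simp

end normed

theorem index_sq (E : Type*) [Field E] [Algebra ℚ_[2] E] [FiniteDimensional ℚ_[2] E] :
    (powMonoidHom 2 : Eˣ →* _).range.index = 2 ^ (Module.finrank ℚ_[2] E + 2) := by
  let := spectralNorm.normedField ℚ_[2] E
  let := spectralNorm.normedAlgebra ℚ_[2] E
  have : IsUltrametricDist E := IsUltrametricDist.isUltrametricDist_of_isNonarchimedean_norm isNonarchimedean_spectralNorm
  exact index_sq_normed

theorem index_cube (E : Type*) [Field E] [Algebra ℚ_[2] E] [FiniteDimensional ℚ_[2] E] (h : ¬ ∃ ζ : E, IsPrimitiveRoot ζ 3) :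
    (powMonoidHom 3 : Eˣ →* _).range.index = 3 := by
  let := spectralNorm.normedField ℚ_[2] E
  let := spectralNorm.normedAlgebra ℚ_[2] E
  have : IsUltrametricDist E := IsUltrametricDist.isUltrametricDist_of_isNonarchimedean_norm isNonarchimedean_spectralNorm
  exact index_cube_normed h


section gal
variable {F Ω : Type*} [Field F] [Field Ω] [Algebra F Ω] [IsGalois F Ω]

lemma mem_base_iff (x : Ω) : (∃ c : F, algebraMap F Ω c = x) ↔ ∀ g : Ω ≃ₐ[F] Ω, g x = x :=
  InfiniteGalois.mem_range_algebraMap_iff_fixed x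

lemma mem_field_iff (M : IntermediateField F Ω) (x : Ω) :
    x ∈ M ↔ ∀ g : Ω ≃ₐ[F] Ω, (∀ y ∈ M, g y = y) → g x = x := by
  constructor
  · intro h g hg; exact hg x h
  · intro h
    rw [← InfiniteGalois.fixedField_fixingSubgroup M, IntermediateField.mem_fixedField_iff]
    intro g hg
    exact h g (fun y hy => (IntermediateField.mem_fixingSubgroup_iff _ _).1 hg y hy)

lemma fix_adjoin {S : Set Ω} {g : Ω ≃ₐ[F] Ω} (h : ∀ y ∈ S, g y = y) {x : Ω} (hx : x ∈ adjoin F S) : g x = x := by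
  induction hx using IntermediateField.adjoin_induction with
  | mem x hx => exact h x hx
  | algebraMap x => exact g.commutes x
  | add x y _ _ h1 h2 => rw [map_add, h1, h2]
  | inv x _ h1 => rw [map_inv₀, h1]
  | mul x y _ _ h1 h2 => rw [map_mul, h1, h2]

lemma mem_adjoin_iff' (S : Set Ω) (x : Ω) :
    x ∈ adjoin F S ↔ ∀ g : Ω ≃ₐ[F] Ω, (∀ y ∈ S, g y = y) → g x = x := by
  constructor
  · intro h g hg; exact fix_adjoin hg h
  · intro h
    rw [mem_field_iff]
    intro g hg
    exact h g (fun y hy => hg y (subset_adjoin F S hy))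

lemma exists_conj {x y : Ω} (h : minpoly F x = minpoly F y) : ∃ g : Ω ≃ₐ[F] Ω, g x = y := by
  have : IsConjRoot F y x := h.symm
  obtain ⟨g, hg⟩ := isConjRoot_iff_exists_algEquiv.1 this
  exact ⟨g, hg⟩

/-- the basic data -/
structure Dat (F Ω : Type*) [Field F] [Field Ω] [Algebra F Ω] where
  ω : Ω
  r : Ω
  a : F
  hω : ω ^ 2 + ω + 1 = 0
  hωF : ¬ ∃ c : F, algebraMap F Ω c = ω
  hr : r ^ 3 = algebraMap F Ω a
  ha : ¬ ∃ c : F, c ^ 3 = a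

namespace Dat
variable (D : Dat F Ω)
include D

lemma ω3 : D.ω ^ 3 = 1 := by linear_combination (D.ω - 1) * D.hω

lemma a0 : D.a ≠ 0 := fun h => D.ha ⟨0, by simp [h]⟩
lemma r0 : D.r ≠ 0 := by
  intro h; have := D.hr; rw [h] at this
  have := (algebraMap F Ω).injective (this.symm.trans (by simp) : algebraMap F Ω D.a = algebraMap F Ω 0)
  exact D.a0 this
lemma ω0 : D.ω ≠ 0 := by
  intro h; have := D.hω; rw [h] at this; simp at this
lemma ω1 : D.ω ≠ 1 := fun h => D.hωF ⟨1, by simp [h]⟩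

lemma cube_eq_one {x : Ω} (h : x ^ 3 = 1) : x = 1 ∨ x = D.ω ∨ x = D.ω ^ 2 := by
  have : (x - 1) * ((x - D.ω) * (x - D.ω ^ 2)) = 0 := by
    have h3 := D.ω3
    linear_combination h + (-x^2 + x) * D.hω + (x - 1) * h3
  rcases mul_eq_zero.1 this with h | h
  · exact .inl (sub_eq_zero.1 h)
  rcases mul_eq_zero.1 h with h | h
  · exact .inr (.inl (sub_eq_zero.1 h))
  · exact .inr (.inr (sub_eq_zero.1 h))

lemma conj_ω (g : Ω ≃ₐ[F] Ω) : g D.ω = D.ω ∨ g D.ω = D.ω ^ 2 := by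
  have h : g D.ω ^ 3 = 1 := by rw [← map_pow, D.ω3, map_one]
  rcases D.cube_eq_one h with h | h | h
  · exact absurd (g.injective (h.trans (map_one g).symm)) D.ω1
  · exact .inl h
  · exact .inr h

lemma cube_root {x y : Ω} (hy : y ≠ 0) (h : x ^ 3 = y ^ 3) : x = y ∨ x = D.ω * y ∨ x = D.ω ^ 2 * y := by
  have h1 : (x / y) ^ 3 = 1 := by rw [div_pow, h, div_self (pow_ne_zero _ hy)]
  rcases D.cube_eq_one h1 with h | h | h <;> rw [div_eq_iff hy] at h <;> simp [h]

lemma conj_r (g : Ω ≃ₐ[F] Ω) : g D.r = D.r ∨ g D.r = D.ω * D.r ∨ g D.r = D.ω ^ 2 * D.r := by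
  apply D.cube_root D.r0
  rw [← map_pow, D.hr, AlgEquiv.commutes]

lemma irred : Irreducible (X ^ 3 - C D.a : F[X]) :=
  X_pow_sub_C_irreducible_of_prime Nat.prime_three (fun b hb => D.ha ⟨b, hb⟩)

lemma minpoly_r {x : Ω} (hx : x ^ 3 = algebraMap F Ω D.a) : minpoly F x = X ^ 3 - C D.a :=
  (minpoly.eq_of_irreducible_of_monic D.irred (by simp [hx]) (monic_X_pow_sub_C _ (by norm_num))).symm

lemma exists_s : ∃ s : Ω ≃ₐ[F] Ω, s D.r = D.ω * D.r ∧ s D.ω = D.ω := by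
  have h3 := D.ω3
  obtain ⟨g, hg⟩ : ∃ g : Ω ≃ₐ[F] Ω, g D.r = D.ω * D.r := exists_conj
    ((D.minpoly_r D.hr).trans (D.minpoly_r (by rw [mul_pow, h3, one_mul, D.hr])).symm)
  obtain ⟨g', hg'⟩ : ∃ g : Ω ≃ₐ[F] Ω, g D.r = D.ω ^ 2 * D.r := exists_conj
    ((D.minpoly_r D.hr).trans (D.minpoly_r (by rw [mul_pow, D.hr]; linear_combination (D.ω ^ 3 + 1) * (algebraMap F Ω D.a) * h3)).symm)
  rcases D.conj_ω g with h | h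
  · exact ⟨g, hg, h⟩
  rcases D.conj_ω g' with h' | h'
  · refine ⟨g' * g', ?_, ?_⟩
    · simp only [AlgEquiv.mul_apply, hg', map_mul, map_pow, h']
      linear_combination D.ω * D.r * h3
    · simp only [AlgEquiv.mul_apply, h']
  · refine ⟨g' * g, ?_, ?_⟩
    · simp only [AlgEquiv.mul_apply, hg, hg', map_mul, map_pow, h']
      linear_combination D.ω * D.r * h3
    · simp only [AlgEquiv.mul_apply, h', h, map_pow]
      linear_combination D.ω * h3

/-- rotation -/
noncomputable def s : Ω ≃ₐ[F] Ω := D.exists_s.choose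
@[simp] lemma s_r : D.s D.r = D.ω * D.r := D.exists_s.choose_spec.1
@[simp] lemma s_ω : D.s D.ω = D.ω := D.exists_s.choose_spec.2

lemma exists_t : ∃ t : Ω ≃ₐ[F] Ω, t D.r = D.r ∧ t D.ω = D.ω ^ 2 := by
  have h3 := D.ω3
  have : ∃ g : Ω ≃ₐ[F] Ω, g D.ω = D.ω ^ 2 := by
    by_contra! h
    exact D.hωF ((mem_base_iff _).2 (fun g => (D.conj_ω g).resolve_right (h g)))
  obtain ⟨g, hg⟩ := this
  rcases D.conj_r g with h | h | h
  · exact ⟨g, h, hg⟩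
  · refine ⟨D.s * (D.s * g), ?_, ?_⟩
    · simp only [AlgEquiv.mul_apply, h, map_mul, map_pow, s_r, s_ω]
      linear_combination D.r * h3
    · simp only [AlgEquiv.mul_apply, hg, map_mul, map_pow, s_r, s_ω]
  · refine ⟨D.s * g, ?_, ?_⟩
    · simp only [AlgEquiv.mul_apply, h, map_mul, map_pow, s_r, s_ω]
      linear_combination D.r * h3
    · simp only [AlgEquiv.mul_apply, hg, map_mul, map_pow, s_r, s_ω]

/-- reflection -/
noncomputable def t : Ω ≃ₐ[F] Ω := D.exists_t.choose
@[simp] lemma t_r : D.t D.r = D.r := D.exists_t.choose_spec.1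
@[simp] lemma t_ω : D.t D.ω = D.ω ^ 2 := D.exists_t.choose_spec.2

/-- the cubic field -/
def E : IntermediateField F Ω := F⟮D.r⟯

lemma mem_E (x : Ω) : x ∈ D.E ↔ ∀ g : Ω ≃ₐ[F] Ω, g D.r = D.r → g x = x := by
  rw [E, mem_adjoin_iff']; simp

lemma eq_on_E {x : Ω} (hx : x ∈ D.E) {g h : Ω ≃ₐ[F] Ω} (hgh : g D.r = h D.r) : g x = h x := by
  have := (D.mem_E x).1 hx (h⁻¹ * g) (by simp [AlgEquiv.mul_apply, hgh])
  rw [AlgEquiv.mul_apply] at this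
  have h2 := congr_arg h this
  simpa using h2

lemma conj_E {x : Ω} (hx : x ∈ D.E) (g : Ω ≃ₐ[F] Ω) : g x = x ∨ g x = D.s x ∨ g x = D.s (D.s x) := by
  rcases D.conj_r g with h | h | h
  · exact .inl ((D.mem_E x).1 hx g h)
  · exact .inr (.inl (D.eq_on_E hx (by simp [h])))
  · refine .inr (.inr (D.eq_on_E (h := D.s * D.s) hx ?_))
    simp [h, AlgEquiv.mul_apply, sq, mul_assoc]

lemma sss {x : Ω} (hx : x ∈ D.E) : D.s (D.s (D.s x)) = x := by
  apply (D.mem_E x).1 hx (D.s * (D.s * D.s))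
  simp only [AlgEquiv.mul_apply, map_mul, s_r, s_ω]
  linear_combination D.r * D.ω3

lemma ts {x : Ω} (hx : x ∈ D.E) : D.t (D.s x) = D.s (D.s x) := by
  apply D.eq_on_E (g := D.t * D.s) (h := D.s * D.s) hx
  simp [AlgEquiv.mul_apply, sq, mul_assoc]

lemma tss {x : Ω} (hx : x ∈ D.E) : D.t (D.s (D.s x)) = D.s x := by
  apply D.eq_on_E (g := D.t * (D.s * D.s)) (h := D.s) hx
  simp [AlgEquiv.mul_apply]
  linear_combination D.ω * D.r * D.ω3

lemma tE {x : Ω} (hx : x ∈ D.E) : D.t x = x := (D.mem_E x).1 hx _ D.t_r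

/-- if `s x = x` then `x ∈ F` -/
lemma base_of_s {x : Ω} (hx : x ∈ D.E) (h : D.s x = x) : ∃ c : F, algebraMap F Ω c = x := by
  rw [mem_base_iff]
  intro g
  rcases D.conj_E hx g with h' | h' | h' <;> simp [h', h]

lemma fix_r_of {x : Ω} (hx : x ∈ D.E) (hF : ¬ ∃ c : F, algebraMap F Ω c = x) (g : Ω ≃ₐ[F] Ω) (hg : g x = x) : g D.r = D.r := by
  rcases D.conj_r g with h | h | h
  · exact h
  · exfalso
    exact hF (D.base_of_s hx (by rw [← D.eq_on_E hx (g := g) (by simp [h]), hg]))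
  · exfalso
    have h1 : g x = (D.s * D.s) x := D.eq_on_E hx (by simp [h, AlgEquiv.mul_apply, sq, mul_assoc])
    rw [hg, AlgEquiv.mul_apply] at h1
    have h2 := D.sss hx
    rw [← h1] at h2
    exact hF (D.base_of_s hx h2)

/-- every automorphism agrees on `r`, `ω` with a word in `s`, `t` -/
lemma gen (g : Ω ≃ₐ[F] Ω) : ∃ h : Ω ≃ₐ[F] Ω, (h = 1 ∨ h = D.s ∨ h = D.s * D.s ∨ h = D.t ∨ h = D.s * D.t ∨ h = D.s * D.s * D.t)
    ∧ g D.r = h D.r ∧ g D.ω = h D.ω := by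
  rcases D.conj_r g with h | h | h <;> rcases D.conj_ω g with h' | h'
  · exact ⟨1, by simp, by simp [h], by simp [h']⟩
  · exact ⟨D.t, by simp, by simp [h], by simp [h']⟩
  · exact ⟨D.s, by simp, by simp [h], by simp [h']⟩
  · exact ⟨D.s * D.t, by simp, by simp [h, AlgEquiv.mul_apply], by simp [h', AlgEquiv.mul_apply]⟩
  · exact ⟨D.s * D.s, by simp, by simp [h, AlgEquiv.mul_apply, sq, mul_assoc], by simp [h', AlgEquiv.mul_apply]⟩
  · exact ⟨D.s * D.s * D.t, by simp, by simp [h, AlgEquiv.mul_apply, sq, mul_assoc], by simp [h', AlgEquiv.mul_apply]⟩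

lemma eq_on_s {x : Ω} (hx : x ∈ D.E) {g h : Ω ≃ₐ[F] Ω} (h1 : g D.r = h D.r) (h2 : g D.ω = h D.ω) :
    g (D.s x) = h (D.s x) :=
  D.eq_on_E (g := g * D.s) (h := h * D.s) hx (by simp [AlgEquiv.mul_apply, h1, h2])

lemma eq_on_ss {x : Ω} (hx : x ∈ D.E) {g h : Ω ≃ₐ[F] Ω} (h1 : g D.r = h D.r) (h2 : g D.ω = h D.ω) :
    g (D.s (D.s x)) = h (D.s (D.s x)) :=
  D.eq_on_E (g := g * (D.s * D.s)) (h := h * (D.s * D.s)) hx (by simp [AlgEquiv.mul_apply, h1, h2])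

lemma norm_base {x : Ω} (hx : x ∈ D.E) : ∃ c : F, algebraMap F Ω c = x * D.s x * D.s (D.s x) := by
  rw [mem_base_iff]
  intro g
  have h3 := D.sss hx
  obtain ⟨h, hh, h1, h2⟩ := D.gen g
  rw [map_mul, map_mul, D.eq_on_E hx h1, D.eq_on_s hx h1 h2, D.eq_on_ss hx h1 h2]
  rcases hh with rfl | rfl | rfl | rfl | rfl | rfl <;>
    simp only [AlgEquiv.mul_apply, AlgEquiv.one_apply, h3, D.ts hx, D.tss hx, D.tE hx] <;> ring

end Dat
end gal


lemma card_of_coset {G X : Type*} [CommGroup G] (N : Subgroup G) (hN : N.index ≠ 0)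
    (Φ : (u : G) → u ∉ N → X) (hs : ∀ x, ∃ u hu, Φ u hu = x)
    (hi : ∀ u v hu hv, Φ u hu = Φ v hv ↔ u⁻¹ * v ∈ N) : Nat.card X = N.index - 1 := by
  have hne : ∀ q : {q : G ⧸ N // q ≠ 1}, q.1.out ∉ N := by
    intro q h
    apply q.2
    rw [← QuotientGroup.out_eq' q.1]
    exact (QuotientGroup.eq_one_iff _).2 h
  have hb : Function.Bijective (fun q : {q : G ⧸ N // q ≠ 1} => Φ q.1.out (hne q)) := by
    constructor
    · intro p q h
      have := (hi _ _ _ _).1 h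
      rw [← QuotientGroup.eq, QuotientGroup.out_eq', QuotientGroup.out_eq'] at this
      exact Subtype.ext this
    · intro x
      obtain ⟨u, hu, rfl⟩ := hs x
      refine ⟨⟨(u : G ⧸ N), fun h => hu ((QuotientGroup.eq_one_iff _).1 h)⟩, ?_⟩
      rw [hi, ← QuotientGroup.eq, QuotientGroup.out_eq']
  rw [← Nat.card_congr (Equiv.ofBijective _ hb)]
  have : Finite (G ⧸ N) := Nat.finite_of_card_ne_zero hN
  classical
  have := Fintype.ofFinite (G ⧸ N)
  rw [Nat.card_eq_fintype_card, Fintype.card_subtype_compl, Fintype.card_subtype_eq, Subgroup.index, Nat.card_eq_fintype_card]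

namespace Dat
variable {F Ω : Type*} [Field F] [Field Ω] [Algebra F Ω] [IsGalois F Ω] (D : Dat F Ω)

lemma finrank_E : Module.finrank F D.E = 3 := by
  have hi : IsIntegral F D.r := Algebra.IsIntegral.isIntegral _
  rw [E, IntermediateField.adjoin.finrank hi, D.minpoly_r D.hr, natDegree_X_pow_sub_C]

instance : FiniteDimensional F D.E := FiniteDimensional.of_finrank_pos (by rw [D.finrank_E]; norm_num)

lemma norm_eq [IsAlgClosed Ω] (x : D.E) :
    algebraMap F Ω (Algebra.norm F x) = (x : Ω) * D.s x * D.s (D.s x) := by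
  have : Algebra.IsSeparable F D.E := inferInstance
  classical
  rw [Algebra.norm_eq_prod_embeddings F Ω x]
  have e1 : Fintype.card (D.E →ₐ[F] Ω) = 3 := by
    rw [AlgHom.card_of_splits, D.finrank_E]
    intro y; exact IsAlgClosed.splits _
  let φ : Fin 3 → (D.E →ₐ[F] Ω) := fun i => ((D.s ^ (i : ℕ) : Ω ≃ₐ[F] Ω) : Ω →ₐ[F] Ω).comp D.E.val
  have hrE : D.r ∈ D.E := mem_adjoin_simple_self F D.r
  have h0 := D.r0
  have hω := D.hω
  have hω1 := D.ω1
  have h2 : D.ω ^ 2 ≠ 1 := fun h => hω1 (by linear_combination D.ω3 - D.ω * h)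
  have hinj : Function.Injective φ := by
    intro i j hij
    have := DFunLike.congr_fun hij ⟨D.r, hrE⟩
    fin_cases i <;> fin_cases j <;> simp [φ, pow_two, AlgEquiv.mul_apply, h0, hω1, D.ω0, hω1.symm] at this ⊢
    · exact h2 (mul_right_cancel₀ h0 (by linear_combination -this))
    · exact h2 (mul_right_cancel₀ h0 (by linear_combination this))
  have hbij : Function.Bijective φ := (Fintype.bijective_iff_injective_and_card φ).2 ⟨hinj, by simp [e1]⟩
  rw [← Fintype.prod_bijective φ hbij (fun i => φ i x) _ (fun i => rfl)]
  simp [Fin.prod_univ_three, φ, pow_two, AlgEquiv.mul_apply]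

/-- square classes with square norm -/
noncomputable def H : Subgroup D.Eˣ := (powMonoidHom 2 : Fˣ →* Fˣ).range.comap (Units.map (Algebra.norm F))

lemma sq_le_H : (powMonoidHom 2 : D.Eˣ →* D.Eˣ).range ≤ D.H := by
  rintro _ ⟨u, rfl⟩
  exact ⟨Units.map (Algebra.norm F) u, by simp⟩

/-- the squares inside `H` -/
noncomputable def N : Subgroup D.H := (powMonoidHom 2 : D.Eˣ →* D.Eˣ).range.subgroupOf D.H

end Dat

theorem index_N {F Ω : Type*} [Field F] [Field Ω] [Algebra F Ω] [IsGalois F Ω] (D : Dat F Ω)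
   [Algebra ℚ_[2] F] [FiniteDimensional ℚ_[2] F] : D.N.index = 2 ^ (2 * Module.finrank ℚ_[2] F) := by
  let _ : Algebra ℚ_[2] D.E := ((algebraMap F D.E).comp (algebraMap ℚ_[2] F)).toAlgebra
  have : IsScalarTower ℚ_[2] F D.E := IsScalarTower.of_algebraMap_eq (fun x => rfl)
  have : FiniteDimensional ℚ_[2] D.E := FiniteDimensional.trans ℚ_[2] F D.E
  have h1 := index_sq D.E
  have h2 := index_sq F
  rw [← Module.finrank_mul_finrank ℚ_[2] F D.E, D.finrank_E] at h1
  have h3 := Subgroup.relIndex_mul_index D.sq_le_H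
  have h4 : D.H.index = (powMonoidHom 2 : Fˣ →* Fˣ).range.index := by
    rw [Dat.H, Subgroup.index_comap, ← Subgroup.relIndex_sup_right, ← Subgroup.relIndex_top_right]
    congr 1
    rw [eq_top_iff]
    intro u _
    have : u = (u⁻¹) ^ 2 * u ^ 3 := by group
    rw [this]
    refine Subgroup.mul_mem _ (Subgroup.mem_sup_right ⟨u⁻¹, by simp⟩) (Subgroup.mem_sup_left ⟨Units.map (algebraMap F D.E).toMonoidHom u, ?_⟩)
    ext
    simp [Algebra.norm_algebraMap, D.finrank_E]
  rw [h4, h1, h2] at h3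
  have : D.N.index = (powMonoidHom 2 : D.Eˣ →* D.Eˣ).range.relIndex D.H := rfl
  rw [this]
  refine Nat.eq_of_mul_eq_mul_right (pow_pos two_pos (Module.finrank ℚ_[2] F + 2)) ?_
  rw [h3, ← pow_add]; congr 1; ring

namespace Dat
variable {F Ω : Type*} [Field F] [Field Ω] [Algebra F Ω] [IsGalois F Ω] [CharZero Ω] (D : Dat F Ω)

/-- admissible elements -/
structure Good (α : Ω) : Prop where
  mem : α ∈ D.E
  ne : α ≠ 0
  sq : ∃ c : F, algebraMap F Ω c ^ 2 = α * D.s α * D.s (D.s α)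
  nsq : ¬ ∃ z ∈ D.E, z ^ 2 = α

variable {D}

lemma Good.notF {α : Ω} (h : D.Good α) : ¬ ∃ c : F, algebraMap F Ω c = α := by
  rintro ⟨b, rfl⟩
  obtain ⟨c, hc⟩ := h.sq
  have h0 := h.ne
  simp only [AlgEquiv.commutes] at hc
  refine h.nsq ⟨algebraMap F Ω c / algebraMap F Ω b, div_mem (D.E.algebraMap_mem _) (D.E.algebraMap_mem _), ?_⟩
  rw [div_pow, hc]; field_simp

lemma Good.ne_s {α : Ω} (h : D.Good α) : D.s α ≠ α := fun hh => h.notF (D.base_of_s h.mem hh)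
lemma Good.ne_s2 {α : Ω} (h : D.Good α) : D.s (D.s α) ≠ D.s α := fun hh => h.ne_s (D.s.injective hh)
lemma Good.ne_s3 {α : Ω} (h : D.Good α) : D.s (D.s α) ≠ α := fun hh => h.ne_s (by
  have := D.sss h.mem
  rw [hh] at this; exact this)

variable (D)

lemma sE_ne {x : Ω} (h : x ≠ 0) : D.s x ≠ 0 := by simpa using h

/-- descent of squares from `L = E(ω)` to `E`, for elements of square norm -/
lemma sq_descend {β z : Ω} (hβ : β ∈ D.E) (h0 : β ≠ 0) (hz : z ^ 2 = β)
    (hN : ∃ c : F, algebraMap F Ω c ^ 2 = β * D.s β * D.s (D.s β))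
    (hL : ∀ g : Ω ≃ₐ[F] Ω, g D.r = D.r → g D.ω = D.ω → g z = z) : ∃ z ∈ D.E, z ^ 2 = β := by
  have hω := D.hω
  have ht : D.t z = z ∨ D.t z = - z := by
    rw [← sq_eq_sq_iff_eq_or_eq_neg, ← map_pow, hz, D.tE hβ]
  have hg : ∀ g : Ω ≃ₐ[F] Ω, g D.r = D.r → (g D.ω = D.ω ∧ g z = z) ∨ (g D.ω = D.ω ^ 2 ∧ g z = D.t z) := by
    intro g hr
    rcases D.conj_ω g with h | h
    · exact .inl ⟨h, hL g hr h⟩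
    · refine .inr ⟨h, ?_⟩
      have h1 : ∀ x, g x = D.t x → D.t.symm (g x) = x := fun x hx => by rw [hx]; simp
      have := hL (D.t⁻¹ * g) (h1 _ (by simp [hr])) (h1 _ (by simp [h]))
      have := congr_arg D.t this
      simpa [AlgEquiv.mul_apply] using this
  rcases ht with ht | ht
  · refine ⟨z, (D.mem_E _).2 (fun g hr => ?_), hz⟩
    rcases hg g hr with h | h
    · exact h.2
    · rw [h.2, ht]
  · exfalso
    have hw : z * (2 * D.ω + 1) ∈ D.E := by
      rw [mem_E]
      intro g hr
      rcases hg g hr with h | h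
      · simp only [map_mul, map_add, map_one, map_ofNat, h.1, h.2]
      · simp only [map_mul, map_add, map_one, map_ofNat, h.1, h.2, ht]
        linear_combination -2 * z * hω
    obtain ⟨n, hn⟩ := D.norm_base hw
    obtain ⟨c, hc⟩ := hN
    have hc0 : algebraMap F Ω c ≠ 0 := by
      intro h
      rw [h] at hc
      have : β * D.s β * D.s (D.s β) ≠ 0 := mul_ne_zero (mul_ne_zero h0 (D.sE_ne h0)) (D.sE_ne (D.sE_ne h0))
      exact this (by rw [← hc]; simp)
    have h1 : algebraMap F Ω n ^ 2 = -27 * algebraMap F Ω c ^ 2 := by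
      have e1 : (D.s z) ^ 2 = D.s β := by rw [← map_pow, hz]
      have e2 : (D.s (D.s z)) ^ 2 = D.s (D.s β) := by rw [← map_pow, ← map_pow, hz]
      have e3 : (2 * D.ω + 1) ^ 2 = -3 := by linear_combination 4 * hω
      rw [hn, hc, ← e2, ← e1, ← hz]
      simp only [map_mul, map_add, map_one, map_ofNat, s_ω]
      calc _ = z ^ 2 * (D.s z) ^ 2 * (D.s (D.s z)) ^ 2 * ((2 * D.ω + 1) ^ 2) ^ 3 := by ring
        _ = _ := by rw [e3]; ring
    have h2 : (algebraMap F Ω (n / (3 * c))) ^ 2 = (2 * D.ω + 1) ^ 2 := by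
      have e3 : (2 * D.ω + 1) ^ 2 = -3 := by linear_combination 4 * hω
      rw [e3, map_div₀, div_pow, h1]; simp only [map_mul, map_ofNat]
      field_simp; norm_num
    rcases sq_eq_sq_iff_eq_or_eq_neg.1 h2 with h | h
    · exact D.hωF ⟨(n / (3 * c) - 1) / 2, by
        rw [map_div₀, map_sub, h, map_ofNat]; simp⟩
    · exact D.hωF ⟨(- (n / (3 * c)) - 1) / 2, by
        rw [map_div₀, map_sub, map_neg, h, map_ofNat]; simp⟩

/-- the system of square roots attached to `α` with enough automorphisms -/
structure Quad (α : Ω) where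
  y1 : Ω
  y2 : Ω
  y3 : Ω
  h1 : y1 ^ 2 = α
  h2 : y2 ^ 2 = D.s α
  h3 : y3 ^ 2 = D.s (D.s α)
  s1 : D.s y1 = y2
  s2 : D.s y2 = y3
  s3 : D.s y3 = y1
  pr : ∀ g : Ω ≃ₐ[F] Ω, g (y1 * y2 * y3) = y1 * y2 * y3
  v1 : Ω ≃ₐ[F] Ω
  v2 : Ω ≃ₐ[F] Ω
  v1r : v1 D.r = D.r
  v1ω : v1 D.ω = D.ω
  v2r : v2 D.r = D.r
  v2ω : v2 D.ω = D.ω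
  v11 : v1 y1 = y1
  v12 : v1 y2 = - y2
  v13 : v1 y3 = - y3
  v21 : v2 y1 = - y1
  v22 : v2 y2 = y2
  v23 : v2 y3 = - y3
  t' : Ω ≃ₐ[F] Ω
  t'r : t' D.r = D.r
  t'ω : t' D.ω = D.ω ^ 2
  t1 : t' y1 = y1
  t2 : t' y2 = y3
  t3 : t' y3 = y2

variable {D}

lemma Good.quad [IsAlgClosed Ω] {α : Ω} (h : D.Good α) : Nonempty (Quad D α) := by
  obtain ⟨y1, h1⟩ := IsAlgClosed.exists_pow_nat_eq α (n := 2) (by norm_num)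
  obtain ⟨y2, s1⟩ : ∃ y2, D.s y1 = y2 := ⟨_, rfl⟩
  obtain ⟨y3, s2⟩ : ∃ y3, D.s y2 = y3 := ⟨_, rfl⟩
  have h2 : y2 ^ 2 = D.s α := by rw [← s1, ← map_pow, h1]
  have h3 : y3 ^ 2 = D.s (D.s α) := by rw [← s2, ← map_pow, h2]
  have hy1 : y1 ≠ 0 := by rintro rfl; exact h.ne (by simp [← h1])
  have hy2 : y2 ≠ 0 := by rw [← s1]; exact D.sE_ne hy1
  have hy3 : y3 ≠ 0 := by rw [← s2]; exact D.sE_ne hy2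
  have pr : ∀ g : Ω ≃ₐ[F] Ω, g (y1 * y2 * y3) = y1 * y2 * y3 := by
    obtain ⟨c, hc⟩ := h.sq
    rw [← h3, ← h2, ← h1, ← mul_pow, ← mul_pow] at hc
    rcases sq_eq_sq_iff_eq_or_eq_neg.1 hc.symm with h | h <;> rw [h] <;> simp
  have s3 : D.s y3 = y1 := by
    have := pr D.s
    rw [map_mul, map_mul, s1, s2] at this
    exact mul_left_cancel₀ (mul_ne_zero hy2 hy3) (by linear_combination this)
  -- signs of elements fixing `L`
  have sgn : ∀ {g : Ω ≃ₐ[F] Ω} {x y : Ω}, g (x ^ 2) = y ^ 2 → g x = y ∨ g x = - y := by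
    intro g x y h; rwa [map_pow, sq_eq_sq_iff_eq_or_eq_neg] at h
  have si : ∀ {x y : Ω}, D.s x = y → D.s⁻¹ y = x := by
    rintro x y rfl; exact D.s.symm_apply_apply x
  have sir : D.s⁻¹ D.r = D.ω ^ 2 * D.r := si (by simp only [map_mul, map_pow, s_ω, s_r]; linear_combination D.r * D.ω3)
  have siω : D.s⁻¹ D.ω = D.ω := si (by simp)
  have conjr : ∀ g : Ω ≃ₐ[F] Ω, g D.r = D.r → g D.ω = D.ω → (D.s * g * D.s⁻¹) D.r = D.r := by
    intro g hr hω
    rw [AlgEquiv.mul_apply, AlgEquiv.mul_apply, sir, map_mul, map_pow, hr, hω, map_mul, map_pow, s_ω, s_r]; linear_combination D.r * D.ω3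
  have conjω : ∀ g : Ω ≃ₐ[F] Ω, g D.r = D.r → g D.ω = D.ω → (D.s * g * D.s⁻¹) D.ω = D.ω := by
    intro g hr hω
    rw [AlgEquiv.mul_apply, AlgEquiv.mul_apply, siω, hω, s_ω]
  have g0 : ∃ g : Ω ≃ₐ[F] Ω, g D.r = D.r ∧ g D.ω = D.ω ∧ g y1 ≠ y1 := by
    by_contra! hh
    exact h.nsq (D.sq_descend h.mem h.ne h1 h.sq hh)
  obtain ⟨g, gr, gω, g1⟩ := g0
  have e1 : g α = α := (D.mem_E _).1 h.mem g gr
  have e2 : g (D.s α) = D.s α := D.eq_on_s h.mem (h := 1) (by simp [gr]) (by simp [gω])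
  have e3 : g (D.s (D.s α)) = D.s (D.s α) := D.eq_on_ss h.mem (h := 1) (by simp [gr]) (by simp [gω])
  rw [← h1] at e1
  rw [← h2] at e2
  rw [← h3] at e3
  have f1 := (sgn e1).resolve_left g1
  have key : ∀ z : Ω, z = - z → z = 0 := fun z hz => by linear_combination (1/2 : Ω) * hz
  have hne : y1 * y2 * y3 ≠ 0 := mul_ne_zero (mul_ne_zero hy1 hy2) hy3
  have V : ∃ v1 v2 : Ω ≃ₐ[F] Ω, v1 D.r = D.r ∧ v1 D.ω = D.ω ∧ v2 D.r = D.r ∧ v2 D.ω = D.ω ∧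
     v1 y1 = y1 ∧ v1 y2 = -y2 ∧ v1 y3 = -y3 ∧ v2 y1 = -y1 ∧ v2 y2 = y2 ∧ v2 y3 = - y3 := by
    have hp := pr g
    rw [map_mul, map_mul] at hp
    rcases sgn e2 with f2 | f2 <;> rcases sgn e3 with f3 | f3
    · exfalso; rw [f1, f2, f3] at hp
      exact hne (key _ (by linear_combination -hp))
    · refine ⟨D.s * (D.s * g * D.s⁻¹) * D.s⁻¹, g, conjr _ (conjr _ gr gω) (conjω _ gr gω), conjω _ (conjr _ gr gω) (conjω _ gr gω), gr, gω, ?_, ?_, ?_, f1, f2, f3⟩ <;>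
      simp only [AlgEquiv.mul_apply, si s1, si s2, si s3, f1, f2, f3, s1, s2, s3, map_neg]
    · refine ⟨D.s * g * D.s⁻¹, D.s * (D.s * g * D.s⁻¹) * D.s⁻¹, conjr _ gr gω, conjω _ gr gω, conjr _ (conjr _ gr gω) (conjω _ gr gω), conjω _ (conjr _ gr gω) (conjω _ gr gω), ?_⟩
      simp only [AlgEquiv.mul_apply, si s1, si s2, si s3, f1, f2, f3, s1, s2, s3, map_neg, and_self]
    · exfalso; rw [f1, f2, f3] at hp
      exact hne (key _ (by linear_combination -hp))
  obtain ⟨v1, v2, v1r, v1ω, v2r, v2ω, v11, v12, v13, v21, v22, v23⟩ := V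
  have T : ∃ t' : Ω ≃ₐ[F] Ω, t' D.r = D.r ∧ t' D.ω = D.ω ^ 2 ∧ t' y1 = y1 ∧ t' y2 = y3 ∧ t' y3 = y2 := by
    have e1 : D.t (y1 ^ 2) = y1 ^ 2 := by rw [h1]; exact D.tE h.mem
    have e2 : D.t (y2 ^ 2) = y3 ^ 2 := by rw [h2, h3]; exact D.ts h.mem
    have e3 : D.t (y3 ^ 2) = y2 ^ 2 := by rw [h2, h3]; exact D.tss h.mem
    have hp := pr D.t
    rw [map_mul, map_mul] at hp
    rcases sgn e1 with f1 | f1 <;> rcases sgn e2 with f2 | f2 <;> rcases sgn e3 with f3 | f3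
    · exact ⟨D.t, by simp [f1, f2, f3]⟩
    · exfalso; rw [f1, f2, f3] at hp
      exact hne (key _ (by linear_combination -hp))
    · exfalso; rw [f1, f2, f3] at hp
      exact hne (key _ (by linear_combination -hp))
    · exact ⟨v1 * D.t, by simp [AlgEquiv.mul_apply, *]⟩
    · exfalso; rw [f1, f2, f3] at hp
      exact hne (key _ (by linear_combination -hp))
    · exact ⟨v1 * v2 * D.t, by simp [AlgEquiv.mul_apply, *]⟩
    · exact ⟨v2 * D.t, by simp [AlgEquiv.mul_apply, *]⟩
    · exfalso; rw [f1, f2, f3] at hp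
      exact hne (key _ (by linear_combination -hp))
  obtain ⟨t', t'r, t'ω, t1, t2, t3⟩ := T
  exact ⟨⟨y1, y2, y3, h1, h2, h3, s1, s2, s3, pr, v1, v2, v1r, v1ω, v2r, v2ω, v11, v12, v13, v21, v22, v23, t', t'r, t'ω, t1, t2, t3⟩⟩

end Dat

section
variable {F Ω : Type*} [Field F] [Field Ω] [Algebra F Ω] [IsGalois F Ω]

lemma gal_of_psi (K : IntermediateField F Ω) {G : Type*} [Group G] (ψ : (Ω ≃ₐ[F] Ω) →* G)
    (hψ : Function.Surjective ψ) (hK : ∀ x, x ∈ K ↔ ∀ g : Ω ≃ₐ[F] Ω, ψ g = 1 → g x = x)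
    (hk : ∀ g : Ω ≃ₐ[F] Ω, (∀ x ∈ K, g x = x) → ψ g = 1) :
    IsGalois F K ∧ Nonempty ((K ≃ₐ[F] K) ≃* G) := by
  have hn : Normal F K := by
    rw [IntermediateField.normal_iff_forall_map_le']
    rintro σ _ ⟨x, hx, rfl⟩
    rw [hK]
    intro g hg
    have := (hK x).1 hx (σ⁻¹ * g * σ) (by simp [hg])
    have := congr_arg σ this
    simpa [AlgEquiv.mul_apply] using this
  refine ⟨⟨⟩, ?_⟩
  have hs := AlgEquiv.restrictNormalHom_surjective (F := F) (K₁ := K) (E := Ω)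
  have hker : (AlgEquiv.restrictNormalHom K : (Ω ≃ₐ[F] Ω) →* (K ≃ₐ[F] K)).ker = ψ.ker := by
    rw [IntermediateField.restrictNormalHom_ker]
    ext g
    rw [IntermediateField.mem_fixingSubgroup_iff, MonoidHom.mem_ker]
    exact ⟨hk g, fun h x hx => (hK x).1 hx g h⟩
  exact ⟨(QuotientGroup.quotientKerEquivOfSurjective _ hs).symm.trans
    ((QuotientGroup.quotientMulEquivOfEq hker).trans (QuotientGroup.quotientKerEquivOfSurjective _ hψ))⟩

lemma psi_of_perm {ι : Type*} [Finite ι] (θ : ι → Ω) (hθ : Function.Injective θ)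
    (h : ∀ (g : Ω ≃ₐ[F] Ω) i, ∃ j, g (θ i) = θ j) :
    ∃ ψ : (Ω ≃ₐ[F] Ω) →* Equiv.Perm ι, ∀ g i, g (θ i) = θ (ψ g i) := by
  choose p hp using h
  have hi : ∀ g, Function.Injective (p g) := by
    intro g i j hij
    apply hθ; apply g.injective; rw [hp, hp, hij]
  refine ⟨⟨⟨fun g => Equiv.ofBijective (p g) (Finite.injective_iff_bijective.1 (hi g)), ?_⟩, ?_⟩, fun g i => hp g i⟩
  · ext i; simp only [Equiv.ofBijective_apply, Equiv.Perm.coe_one, id]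
    apply hθ; rw [← hp]; rfl
  · intro g h; ext i; simp only [Equiv.ofBijective_apply, Equiv.Perm.coe_mul, Function.comp]
    apply hθ; rw [← hp, ← hp, ← hp]; rfl
end

lemma perm4_gen : ∀ p : Equiv.Perm (Fin 4), ∃ i j l : Fin 2, ∃ k : Fin 3, p =
    (c[0,1] * c[2,3] : Equiv.Perm (Fin 4)) ^ (i : ℕ) * (c[0,2] * c[1,3] : Equiv.Perm (Fin 4)) ^ (j : ℕ) *
    (c[1,2,3] : Equiv.Perm (Fin 4)) ^ (k : ℕ) * (c[2,3] : Equiv.Perm (Fin 4)) ^ (l : ℕ) := by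
  decide

namespace Dat
variable {F Ω : Type*} [Field F] [Field Ω] [Algebra F Ω] [IsGalois F Ω] [CharZero Ω] (D : Dat F Ω)

/-- the field attached to `α` -/
def KK (α : Ω) : IntermediateField F Ω :=
  adjoin F {x | x = D.r ∨ x = D.ω ∨ ∃ g : Ω ≃ₐ[F] Ω, x ^ 2 = g α}

lemma mem_KK (α x : Ω) : x ∈ D.KK α ↔ ∀ g : Ω ≃ₐ[F] Ω, (g D.r = D.r ∧ g D.ω = D.ω ∧
    ∀ y, (∃ h : Ω ≃ₐ[F] Ω, y ^ 2 = h α) → g y = y) → g x = x := by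
  rw [KK, mem_adjoin_iff']
  refine forall_congr' fun g => imp_congr_left ?_
  constructor
  · intro h
    exact ⟨h _ (.inl rfl), h _ (.inr (.inl rfl)), fun y hy => h _ (.inr (.inr hy))⟩
  · rintro ⟨h1, h2, h3⟩ y (rfl | rfl | hy)
    exacts [h1, h2, h3 y hy]

namespace Quad
variable {D} {α : Ω} (Q : Quad D α) (hα : D.Good α)
include Q hα

/-- any conjugate square root is one of six -/
lemma six {x : Ω} (hx : ∃ h : Ω ≃ₐ[F] Ω, x ^ 2 = h α) :
    (x = Q.y1 ∨ x = - Q.y1) ∨ (x = Q.y2 ∨ x = - Q.y2) ∨ (x = Q.y3 ∨ x = - Q.y3) := by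
  obtain ⟨h, hx⟩ := hx
  simp only [← sq_eq_sq_iff_eq_or_eq_neg, Q.h1, Q.h2, Q.h3, hx]
  exact D.conj_E hα.mem h

lemma fix_iff (g : Ω ≃ₐ[F] Ω) : (g D.r = D.r ∧ g D.ω = D.ω ∧
    ∀ y, (∃ h : Ω ≃ₐ[F] Ω, y ^ 2 = h α) → g y = y) ↔ (g Q.y1 = Q.y1 ∧ g Q.y2 = Q.y2 ∧ g Q.y3 = Q.y3) := by
  constructor
  · rintro ⟨-, -, h⟩
    exact ⟨h _ ⟨1, Q.h1⟩, h _ ⟨D.s, Q.h2⟩, h _ ⟨D.s * D.s, Q.h3⟩⟩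
  · rintro ⟨g1, g2, g3⟩
    have hr : g D.r = D.r := D.fix_r_of hα.mem hα.notF g (by rw [← Q.h1, map_pow, g1])
    have hr2 : (D.s⁻¹ * g * D.s) D.r = D.r := by
      apply D.fix_r_of hα.mem hα.notF
      have : g (D.s α) = D.s α := by rw [← Q.h2, map_pow, g2]
      rw [AlgEquiv.mul_apply, AlgEquiv.mul_apply, this]
      exact D.s.symm_apply_apply α
    have hr3 := congr_arg D.s hr2
    have hr4 : g (D.s D.r) = D.s D.r := by simpa [AlgEquiv.mul_apply] using hr3
    rw [s_r, map_mul, hr] at hr4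
    refine ⟨hr, mul_right_cancel₀ D.r0 hr4, ?_⟩
    intro y hy
    rcases Q.six hα hy with (rfl | rfl) | (rfl | rfl) | (rfl | rfl) <;> simp [g1, g2, g3]

lemma mem_iff (x : Ω) : x ∈ D.KK α ↔ ∀ g : Ω ≃ₐ[F] Ω, (g Q.y1 = Q.y1 ∧ g Q.y2 = Q.y2 ∧ g Q.y3 = Q.y3) → g x = x := by
  rw [mem_KK]; simp only [Q.fix_iff hα]

lemma finDim : FiniteDimensional F (D.KK α) := by
  have hsub : {x | x = D.r ∨ x = D.ω ∨ ∃ g : Ω ≃ₐ[F] Ω, x ^ 2 = g α} ⊆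
    {D.r, D.ω, Q.y1, -Q.y1, Q.y2, -Q.y2, Q.y3, -Q.y3} := by
    rintro x (h | h | h)
    · simp [h]
    · simp [h]
    · rcases Q.six hα h with (h | h) | (h | h) | (h | h) <;> simp [h]
  have : Finite {x | x = D.r ∨ x = D.ω ∨ ∃ g : Ω ≃ₐ[F] Ω, x ^ 2 = g α} :=
    Set.Finite.subset (Set.toFinite _) hsub
  exact finiteDimensional_adjoin (fun x _ => Algebra.IsIntegral.isIntegral x)

lemma d12 : Q.y1 ^ 2 ≠ Q.y2 ^ 2 := by rw [Q.h1, Q.h2]; exact hα.ne_s.symm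
lemma d23 : Q.y2 ^ 2 ≠ Q.y3 ^ 2 := by rw [Q.h2, Q.h3]; exact hα.ne_s2.symm
lemma d13 : Q.y1 ^ 2 ≠ Q.y3 ^ 2 := by rw [Q.h1, Q.h3]; exact hα.ne_s3.symm

omit hα in
lemma ne1 (h : D.Good α) : Q.y1 ≠ 0 := fun hh => h.ne (by rw [← Q.h1, hh]; simp)
omit hα in
lemma ne2 (h : D.Good α) : Q.y2 ≠ 0 := by rw [← Q.s1]; exact D.sE_ne (Q.ne1 h)
omit hα in
lemma ne3 (h : D.Good α) : Q.y3 ≠ 0 := by rw [← Q.s2]; exact D.sE_ne (Q.ne2 h)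

/-- elements fixing `r`, `ω` act like a sign pattern -/
lemma signs (g : Ω ≃ₐ[F] Ω) (hr : g D.r = D.r) (hω : g D.ω = D.ω) :
    (g Q.y1 = Q.y1 ∧ g Q.y2 = Q.y2 ∧ g Q.y3 = Q.y3) ∨ (g Q.y1 = Q.y1 ∧ g Q.y2 = -Q.y2 ∧ g Q.y3 = -Q.y3) ∨
    (g Q.y1 = -Q.y1 ∧ g Q.y2 = Q.y2 ∧ g Q.y3 = -Q.y3) ∨ (g Q.y1 = -Q.y1 ∧ g Q.y2 = -Q.y2 ∧ g Q.y3 = Q.y3) := by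
  have sgn : ∀ {x y : Ω}, g (x ^ 2) = y ^ 2 → g x = y ∨ g x = - y := by
    intro x y h; rwa [map_pow, sq_eq_sq_iff_eq_or_eq_neg] at h
  have e1 : g α = α := (D.mem_E _).1 hα.mem g hr
  have e2 : g (D.s α) = D.s α := D.eq_on_s hα.mem (h := 1) (by simp [hr]) (by simp [hω])
  have e3 : g (D.s (D.s α)) = D.s (D.s α) := D.eq_on_ss hα.mem (h := 1) (by simp [hr]) (by simp [hω])
  rw [← Q.h1] at e1
  rw [← Q.h2] at e2
  rw [← Q.h3] at e3
  have key : ∀ z : Ω, z = - z → z = 0 := fun z hz => by linear_combination (1/2 : Ω) * hz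
  have hne : Q.y1 * Q.y2 * Q.y3 ≠ 0 := mul_ne_zero (mul_ne_zero (Q.ne1 hα) (Q.ne2 hα)) (Q.ne3 hα)
  have hp := Q.pr g
  rw [map_mul, map_mul] at hp
  rcases sgn e1 with f1 | f1 <;> rcases sgn e2 with f2 | f2 <;> rcases sgn e3 with f3 | f3 <;>
    first
    | (exfalso; rw [f1, f2, f3] at hp
       exact hne (key _ (by linear_combination -hp)))
    | simp only [f1, f2, f3, true_and, and_true, and_self, true_or, or_true]

omit hα in
/-- words -/
lemma word (g : Ω ≃ₐ[F] Ω) : ∃ h v : Ω ≃ₐ[F] Ω, g = h * v ∧ v D.r = D.r ∧ v D.ω = D.ω ∧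
    (h = 1 ∨ h = D.s ∨ h = D.s * D.s ∨ h = Q.t' ∨ h = D.s * Q.t' ∨ h = D.s * D.s * Q.t') := by
  have main : ∀ h : Ω ≃ₐ[F] Ω, (g D.r = h D.r ∧ g D.ω = h D.ω) →
    (h = 1 ∨ h = D.s ∨ h = D.s * D.s ∨ h = Q.t' ∨ h = D.s * Q.t' ∨ h = D.s * D.s * Q.t') →
    ∃ h v : Ω ≃ₐ[F] Ω, g = h * v ∧ v D.r = D.r ∧ v D.ω = D.ω ∧
    (h = 1 ∨ h = D.s ∨ h = D.s * D.s ∨ h = Q.t' ∨ h = D.s * Q.t' ∨ h = D.s * D.s * Q.t') := by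
    intro h h1 h2
    refine ⟨h, h⁻¹ * g, by group, ?_, ?_, h2⟩
    · rw [AlgEquiv.mul_apply, h1.1]; exact h.symm_apply_apply _
    · rw [AlgEquiv.mul_apply, h1.2]; exact h.symm_apply_apply _
  obtain ⟨h, hh, h1, h2⟩ := D.gen g
  rcases hh with rfl | rfl | rfl | rfl | rfl | rfl
  · exact main 1 ⟨h1, h2⟩ (by simp)
  · exact main D.s ⟨h1, h2⟩ (by simp)
  · exact main (D.s * D.s) ⟨h1, h2⟩ (by simp)
  · exact main Q.t' ⟨by rw [h1, t_r, Q.t'r], by rw [h2, t_ω, Q.t'ω]⟩ (by simp)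
  · exact main (D.s * Q.t') ⟨by simp [h1, AlgEquiv.mul_apply, Q.t'r], by simp [h2, AlgEquiv.mul_apply, Q.t'ω]⟩ (by simp)
  · exact main (D.s * D.s * Q.t') ⟨by simp [h1, AlgEquiv.mul_apply, Q.t'r], by simp [h2, AlgEquiv.mul_apply, Q.t'ω]⟩ (by simp)

omit hα in
/-- the four roots -/
def θ : Fin 4 → Ω := ![Q.y1 + Q.y2 + Q.y3, Q.y1 - Q.y2 - Q.y3, -Q.y1 + Q.y2 - Q.y3, -Q.y1 - Q.y2 + Q.y3]

lemma θ_inj : Function.Injective Q.θ := by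
  have h12 := Q.d12 hα
  have h13 := Q.d13 hα
  have h23 := Q.d23 hα
  intro i j hij
  by_contra hne
  have h12' : (Q.y1 - Q.y2) * (Q.y1 + Q.y2) ≠ 0 := fun h => h12 (by linear_combination h)
  have h13' : (Q.y1 - Q.y3) * (Q.y1 + Q.y3) ≠ 0 := fun h => h13 (by linear_combination h)
  have h23' : (Q.y2 - Q.y3) * (Q.y2 + Q.y3) ≠ 0 := fun h => h23 (by linear_combination h)
  fin_cases i <;> fin_cases j <;> simp [θ] at hij hne
  · exact h23' (by linear_combination (1/2 : Ω) * (Q.y2 - Q.y3) * hij)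
  · exact h13' (by linear_combination (1/2 : Ω) * (Q.y1 - Q.y3) * hij)
  · exact h12' (by linear_combination (1/2 : Ω) * (Q.y1 - Q.y2) * hij)
  · exact h23' (by linear_combination (-1/2 : Ω) * (Q.y2 - Q.y3) * hij)
  · exact h12' (by linear_combination (1/2 : Ω) * (Q.y1 + Q.y2) * hij)
  · exact h13' (by linear_combination (1/2 : Ω) * (Q.y1 + Q.y3) * hij)
  · exact h13' (by linear_combination (-1/2 : Ω) * (Q.y1 - Q.y3) * hij)
  · exact h12' (by linear_combination (-1/2 : Ω) * (Q.y1 + Q.y2) * hij)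
  · exact h23' (by linear_combination (1/2 : Ω) * (Q.y2 + Q.y3) * hij)
  · exact h12' (by linear_combination (-1/2 : Ω) * (Q.y1 - Q.y2) * hij)
  · exact h13' (by linear_combination (-1/2 : Ω) * (Q.y1 + Q.y3) * hij)
  · exact h23' (by linear_combination (-1/2 : Ω) * (Q.y2 + Q.y3) * hij)

omit hα in
lemma θ_s (i : Fin 4) : D.s (Q.θ i) = Q.θ ((c[1,2,3] : Equiv.Perm (Fin 4)) i) := by
  have e0 : (c[1,2,3] : Equiv.Perm (Fin 4)) 0 = 0 := by decide
  have e1 : (c[1,2,3] : Equiv.Perm (Fin 4)) 1 = 2 := by decide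
  have e2 : (c[1,2,3] : Equiv.Perm (Fin 4)) 2 = 3 := by decide
  have e3 : (c[1,2,3] : Equiv.Perm (Fin 4)) 3 = 1 := by decide
  fin_cases i <;> simp only [Fin.zero_eta, Fin.mk_one, Fin.reduceFinMk, e0, e1, e2, e3] <;> simp [θ, Q.s1, Q.s2, Q.s3] <;> ring

omit hα in
lemma θ_t (i : Fin 4) : Q.t' (Q.θ i) = Q.θ ((c[2,3] : Equiv.Perm (Fin 4)) i) := by
  have e0 : (c[2,3] : Equiv.Perm (Fin 4)) 0 = 0 := by decide
  have e1 : (c[2,3] : Equiv.Perm (Fin 4)) 1 = 1 := by decide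
  have e2 : (c[2,3] : Equiv.Perm (Fin 4)) 2 = 3 := by decide
  have e3 : (c[2,3] : Equiv.Perm (Fin 4)) 3 = 2 := by decide
  fin_cases i <;> simp only [Fin.zero_eta, Fin.mk_one, Fin.reduceFinMk, e0, e1, e2, e3] <;> simp [θ, Q.t1, Q.t2, Q.t3] <;> ring

omit hα in
lemma θ_v1 (g : Ω ≃ₐ[F] Ω) (g1 : g Q.y1 = Q.y1) (g2 : g Q.y2 = -Q.y2) (g3 : g Q.y3 = -Q.y3) (i : Fin 4) :
    g (Q.θ i) = Q.θ ((c[0,1] * c[2,3] : Equiv.Perm (Fin 4)) i) := by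
  have e0 : (c[0,1] * c[2,3] : Equiv.Perm (Fin 4)) 0 = 1 := by decide
  have e1 : (c[0,1] * c[2,3] : Equiv.Perm (Fin 4)) 1 = 0 := by decide
  have e2 : (c[0,1] * c[2,3] : Equiv.Perm (Fin 4)) 2 = 3 := by decide
  have e3 : (c[0,1] * c[2,3] : Equiv.Perm (Fin 4)) 3 = 2 := by decide
  fin_cases i <;> simp only [Fin.zero_eta, Fin.mk_one, Fin.reduceFinMk, e0, e1, e2, e3] <;> simp [θ, g1, g2, g3] <;> ring

omit hα in
lemma θ_v2 (g : Ω ≃ₐ[F] Ω) (g1 : g Q.y1 = -Q.y1) (g2 : g Q.y2 = Q.y2) (g3 : g Q.y3 = -Q.y3) (i : Fin 4) :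
    g (Q.θ i) = Q.θ ((c[0,2] * c[1,3] : Equiv.Perm (Fin 4)) i) := by
  have e0 : (c[0,2] * c[1,3] : Equiv.Perm (Fin 4)) 0 = 2 := by decide
  have e1 : (c[0,2] * c[1,3] : Equiv.Perm (Fin 4)) 1 = 3 := by decide
  have e2 : (c[0,2] * c[1,3] : Equiv.Perm (Fin 4)) 2 = 0 := by decide
  have e3 : (c[0,2] * c[1,3] : Equiv.Perm (Fin 4)) 3 = 1 := by decide
  fin_cases i <;> simp only [Fin.zero_eta, Fin.mk_one, Fin.reduceFinMk, e0, e1, e2, e3] <;> simp [θ, g1, g2, g3] <;> ring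

lemma θ_perm (g : Ω ≃ₐ[F] Ω) (i : Fin 4) : ∃ j, g (Q.θ i) = Q.θ j := by
  obtain ⟨h, v, rfl, vr, vω, hh⟩ := Q.word g
  have hv : ∃ j, v (Q.θ i) = Q.θ j := by
    rcases Q.signs hα v vr vω with ⟨a, b, c⟩ | ⟨a, b, c⟩ | ⟨a, b, c⟩ | ⟨a, b, c⟩
    · exact ⟨i, by fin_cases i <;> simp [θ, a, b, c]⟩
    · exact ⟨_, Q.θ_v1 v a b c i⟩
    · exact ⟨_, Q.θ_v2 v a b c i⟩
    · have := Q.θ_v1 (Q.v2 * v) (by simp [a, Q.v21, AlgEquiv.mul_apply]) (by simp [b, Q.v22, AlgEquiv.mul_apply]) (by simp [c, Q.v23, AlgEquiv.mul_apply]) i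
      have h2 : Q.v2 (Q.v2 (v (Q.θ i))) = v (Q.θ i) := by
        fin_cases i <;> simp [θ, a, b, c, Q.v21, Q.v22, Q.v23] <;> ring
      rw [AlgEquiv.mul_apply] at this
      rw [← h2, this]
      exact ⟨_, Q.θ_v2 Q.v2 Q.v21 Q.v22 Q.v23 _⟩
  obtain ⟨j, hj⟩ := hv
  rw [AlgEquiv.mul_apply, hj]
  rcases hh with rfl | rfl | rfl | rfl | rfl | rfl <;> simp only [AlgEquiv.mul_apply, AlgEquiv.one_apply, Q.θ_s, Q.θ_t, exists_apply_eq_apply', exists_apply_eq_apply] <;> exact ⟨_, rfl⟩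

theorem gal : IsGalois F (D.KK α) ∧ Nonempty ((D.KK α ≃ₐ[F] D.KK α) ≃* Equiv.Perm (Fin 4)) := by
  have hinj := Q.θ_inj hα
  obtain ⟨ψ, hψ⟩ := psi_of_perm Q.θ hinj (Q.θ_perm hα)
  have val : ∀ (g : Ω ≃ₐ[F] Ω) (p : Equiv.Perm (Fin 4)), (∀ i, g (Q.θ i) = Q.θ (p i)) → ψ g = p := by
    intro g p h
    ext1 i; exact hinj (by rw [← hψ, h])
  have one : ∀ g, ψ g = 1 ↔ (g Q.y1 = Q.y1 ∧ g Q.y2 = Q.y2 ∧ g Q.y3 = Q.y3) := by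
    intro g
    constructor
    · intro h
      have h' : ∀ i, g (Q.θ i) = Q.θ i := fun i => by rw [hψ, h]; rfl
      have e1 : Q.y1 = (Q.θ 0 + Q.θ 1) / 2 := by simp [θ] <;> ring
      have e2 : Q.y2 = (Q.θ 0 + Q.θ 2) / 2 := by simp [θ] <;> ring
      have e3 : Q.y3 = (Q.θ 0 + Q.θ 3) / 2 := by simp [θ] <;> ring
      refine ⟨?_, ?_, ?_⟩
      · rw [e1, map_div₀, map_add, h', h', map_ofNat]
      · rw [e2, map_div₀, map_add, h', h', map_ofNat]
      · rw [e3, map_div₀, map_add, h', h', map_ofNat]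
    · rintro ⟨a, b, c⟩
      exact val g 1 (fun i => by fin_cases i <;> simp [θ, a, b, c])
  apply gal_of_psi (D.KK α) ψ
  · intro p
    obtain ⟨i, j, l, k, rfl⟩ := perm4_gen p
    refine ⟨Q.v1 ^ (i : ℕ) * Q.v2 ^ (j : ℕ) * D.s ^ (k : ℕ) * Q.t' ^ (l : ℕ), ?_⟩
    simp only [map_mul, map_pow]
    rw [val Q.v1 _ (Q.θ_v1 Q.v1 Q.v11 Q.v12 Q.v13), val Q.v2 _ (Q.θ_v2 Q.v2 Q.v21 Q.v22 Q.v23), val D.s _ Q.θ_s, val Q.t' _ Q.θ_t]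
  · intro x
    simp only [one]; exact Q.mem_iff hα x
  · intro g hg
    rw [one]
    exact ⟨hg _ ((Q.mem_iff hα _).2 fun g h => h.1), hg _ ((Q.mem_iff hα _).2 fun g h => h.2.1), hg _ ((Q.mem_iff hα _).2 fun g h => h.2.2)⟩

end Quad
end Dat

namespace Dat
variable {F Ω : Type*} [Field F] [Field Ω] [Algebra F Ω] [IsGalois F Ω] [CharZero Ω] (D : Dat F Ω)

lemma fix_conj {γ : Ω} (hγ : γ ∈ D.E) (g h : Ω ≃ₐ[F] Ω) (hr : g D.r = D.r) (hω : g D.ω = D.ω) : g (h γ) = h γ := by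
  rcases D.conj_E hγ h with e | e | e <;> rw [e]
  · exact (D.mem_E _).1 hγ g hr
  · exact D.eq_on_s hγ (h := 1) (by simp [hr]) (by simp [hω])
  · exact D.eq_on_ss hγ (h := 1) (by simp [hr]) (by simp [hω])

lemma KK_le {α γ : Ω} (hγ : γ ∈ D.E) (h0 : γ ≠ 0) : D.KK (α * γ ^ 2) ≤ D.KK α := by
  intro x hx
  rw [mem_KK] at hx ⊢
  rintro g ⟨h1, h2, h3⟩
  refine hx g ⟨h1, h2, ?_⟩
  rintro y ⟨h, hy⟩
  have hne : h γ ≠ 0 := by simpa using h0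
  have e := h3 (y / h γ) ⟨h, by rw [div_pow, hy, map_mul, map_pow]; field_simp⟩
  rw [map_div₀, D.fix_conj hγ g h h1 h2] at e
  field_simp at e
  exact e

lemma KK_eq {α γ : Ω} (hγ : γ ∈ D.E) (h0 : γ ≠ 0) : D.KK (α * γ ^ 2) = D.KK α := by
  apply le_antisymm (D.KK_le hγ h0)
  have := D.KK_le (α := α * γ ^ 2) (inv_mem hγ) (inv_ne_zero h0)
  rwa [mul_assoc, ← mul_pow, mul_inv_cancel₀ h0, one_pow, mul_one] at this

variable {D}

lemma Quad.agree {α : Ω} (Q : Quad D α) (hα : D.Good α) {z : Ω} (hz : z ∈ D.KK α) {g h : Ω ≃ₐ[F] Ω}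
    (h1 : g Q.y1 = h Q.y1) (h2 : g Q.y2 = h Q.y2) (h3 : g Q.y3 = h Q.y3) : g z = h z := by
  have e : ∀ x, g x = h x → (h⁻¹ * g) x = x := fun x hx => by
    rw [AlgEquiv.mul_apply, hx]; exact h.symm_apply_apply x
  have := (Q.mem_iff hα z).1 hz (h⁻¹ * g) ⟨e _ h1, e _ h2, e _ h3⟩
  have := congr_arg h this
  simpa [AlgEquiv.mul_apply] using this

lemma KK_inj [IsAlgClosed Ω] {α β : Ω} (hα : D.Good α) (hβ : D.Good β) (h : D.KK α = D.KK β) :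
    ∃ γ ∈ D.E, β = α * γ ^ 2 := by
  obtain ⟨Q⟩ := hα.quad
  obtain ⟨z, hz⟩ := IsAlgClosed.exists_pow_nat_eq β (n := 2) (by norm_num)
  have hzK : z ∈ D.KK α := by
    rw [h, KK]; exact subset_adjoin _ _ (.inr (.inr ⟨1, hz⟩))
  have hz0 : z ≠ 0 := by rintro rfl; exact hβ.ne (by simp [← hz])
  have key : ∀ z : Ω, z = - z → z = 0 := fun z hz => by linear_combination (1/2 : Ω) * hz
  have sgn : ∀ {g : Ω ≃ₐ[F] Ω} , g D.r = D.r → g z = z ∨ g z = - z := by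
    intro g hr; rw [← sq_eq_sq_iff_eq_or_eq_neg, ← map_pow, hz]; exact (D.mem_E _).1 hβ.mem g hr
  have toL : ∀ w ∈ D.KK α, Q.v1 w = w → Q.v2 w = w → ∀ g : Ω ≃ₐ[F] Ω, g D.r = D.r → g D.ω = D.ω → g w = w := by
    intro w hw e1 e2 g hr hω
    rcases Q.signs hα g hr hω with ⟨a, b, c⟩ | ⟨a, b, c⟩ | ⟨a, b, c⟩ | ⟨a, b, c⟩
    · exact Q.agree hα hw (h := 1) a b c
    · rw [Q.agree hα hw (h := Q.v1) (by rw [a, Q.v11]) (by rw [b, Q.v12]) (by rw [c, Q.v13]), e1]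
    · rw [Q.agree hα hw (h := Q.v2) (by rw [a, Q.v21]) (by rw [b, Q.v22]) (by rw [c, Q.v23]), e2]
    · rw [Q.agree hα hw (h := Q.v1 * Q.v2) (by simp [AlgEquiv.mul_apply, a, Q.v21, Q.v11])
        (by simp [AlgEquiv.mul_apply, b, Q.v22, Q.v12]) (by simp [AlgEquiv.mul_apply, c, Q.v23, Q.v13]), AlgEquiv.mul_apply, e2, e1]
  have ag := Q.agree hα hzK (g := Q.t' * Q.v2) (h := Q.v1 * Q.v2 * Q.t')
    (by simp [AlgEquiv.mul_apply, Q.v21, Q.v11, Q.t1]) (by simp [AlgEquiv.mul_apply, Q.v22, Q.t2, Q.v23, Q.v13])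
    (by simp [AlgEquiv.mul_apply, Q.v22, Q.t3, Q.v23, Q.t2, Q.v12])
  simp only [AlgEquiv.mul_apply] at ag
  have y1K : Q.y1 ∈ D.KK α := (Q.mem_iff hα _).2 fun g h => h.1
  rcases sgn Q.v1r with f1 | f1
  · rcases sgn Q.v2r with f2 | f2
    · exact absurd (D.sq_descend hβ.mem hβ.ne hz hβ.sq (toL z hzK f1 f2)) hβ.nsq
    · obtain ⟨c, hc⟩ := hα.sq
      obtain ⟨d, hd⟩ := hβ.sq
      obtain ⟨γ, hγ, e⟩ := D.sq_descend (β := β * α) (z := z * Q.y1) (mul_mem hβ.mem hα.mem) (mul_ne_zero hβ.ne hα.ne)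
        (by rw [mul_pow, hz, Q.h1]) ⟨d * c, by rw [map_mul, mul_pow, hc, hd]; simp only [map_mul]; ring⟩
        (toL _ (mul_mem hzK y1K) (by rw [map_mul, f1, Q.v11]) (by rw [map_mul, f2, Q.v21]; ring))
      have := hα.ne
      exact ⟨γ / α, div_mem hγ hα.mem, by rw [div_pow, e]; field_simp⟩
  · exfalso
    rcases sgn Q.v2r with f2 | f2 <;> rcases sgn Q.t'r with f3 | f3 <;>
      simp only [f1, f2, f3, map_neg, neg_neg] at ag
    · exact hz0 (key _ ag)
    · exact hz0 (key _ ag.symm)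
    · exact hz0 (key _ ag.symm)
    · exact hz0 (key _ ag)

end Dat

lemma cube_rep (M : Type*) [Field M] [Algebra ℚ_[2] M] [FiniteDimensional ℚ_[2] M]
    (h : ¬ ∃ ζ : M, IsPrimitiveRoot ζ 3) {a b : M} (ha : ¬ ∃ c, c ^ 3 = a) (hb : b ≠ 0) :
    ∃ c : M, b = c ^ 3 ∨ b = a * c ^ 3 ∨ b = a ^ 2 * c ^ 3 := by
  have h3 := index_cube M h
  have ha0 : a ≠ 0 := fun h => ha ⟨0, by simp [h]⟩
  set N := (powMonoidHom 3 : Mˣ →* Mˣ).range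
  have hc : Nat.card (Mˣ ⧸ N) = 3 := h3
  have : Fact (Nat.Prime 3) := ⟨Nat.prime_three⟩
  have hne : ((Units.mk0 a ha0 : Mˣ) : Mˣ ⧸ N) ≠ 1 := by
    intro hh
    obtain ⟨c, hc⟩ := (QuotientGroup.eq_one_iff _).1 hh
    exact ha ⟨c, by simpa using congr_arg Units.val hc⟩
  obtain ⟨n, hn⟩ := mem_powers_of_prime_card hc hne (g' := ((Units.mk0 b hb : Mˣ) : Mˣ ⧸ N))
  simp only [← QuotientGroup.mk_pow] at hn
  rw [QuotientGroup.eq] at hn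
  obtain ⟨c, hc⟩ := hn
  have e : b = a ^ n * (c : M) ^ 3 := by
    have h1 : (Units.mk0 a ha0) ^ n * c ^ 3 = Units.mk0 b hb := by
      have hc' : c ^ 3 = _ := hc
      rw [hc']; simp
    have := congr_arg Units.val h1
    simpa using this.symm
  have e2 : a ^ n = a ^ (n % 3) * (a ^ (n / 3)) ^ 3 := by
    rw [← pow_mul, ← pow_add]; congr 1; omega
  rw [e2, mul_assoc, ← mul_pow] at e
  have : n % 3 < 3 := Nat.mod_lt _ (by norm_num)
  interval_cases n % 3
  · exact ⟨_, .inl (by simpa using e)⟩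
  · exact ⟨_, .inr (.inl (by simpa using e))⟩
  · exact ⟨_, .inr (.inr e)⟩

namespace Dat
variable {F Ω : Type*} [Field F] [Field Ω] [Algebra F Ω] [IsGalois F Ω] [CharZero Ω] (D : Dat F Ω)

lemma no_prim (M : IntermediateField F Ω) (hM : D.ω ∉ M) : ¬ ∃ ζ : M, IsPrimitiveRoot ζ 3 := by
  rintro ⟨ζ, hζ⟩
  have h1 : (ζ : Ω) ^ 3 = 1 := by
    have := congr_arg (algebraMap M Ω) hζ.pow_eq_one; simpa using this
  rcases D.cube_eq_one h1 with h | h | h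
  · exact hζ.ne_one (by norm_num) (Subtype.ext h)
  · exact hM (h ▸ ζ.2)
  · apply hM
    have : D.ω = (ζ : Ω) ^ 2 := by rw [h]; linear_combination -D.ω * D.ω3
    rw [this]; exact pow_mem ζ.2 2

lemma act_uv {x1 x2 x3 u v : Ω} (hu : 3 * u = x1 + D.ω * x2 + D.ω ^ 2 * x3) (hv : 3 * v = x1 + D.ω ^ 2 * x2 + D.ω * x3)
    (g : Ω ≃ₐ[F] Ω)
    (hp : (g x1 = x1 ∧ g x2 = x2 ∧ g x3 = x3) ∨ (g x1 = x2 ∧ g x2 = x3 ∧ g x3 = x1) ∨ (g x1 = x3 ∧ g x2 = x1 ∧ g x3 = x2) ∨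
      (g x1 = x1 ∧ g x2 = x3 ∧ g x3 = x2) ∨ (g x1 = x2 ∧ g x2 = x1 ∧ g x3 = x3) ∨ (g x1 = x3 ∧ g x2 = x2 ∧ g x3 = x1)) :
    ∃ k : Ω, k ^ 3 = 1 ∧ ((g u = k * u ∧ k * g v = v) ∨ (g u = k * v ∧ k * g v = u)) := by
  have h3 := D.ω3
  have gu : 3 * g u = g x1 + g D.ω * g x2 + g D.ω ^ 2 * g x3 := by simpa only [map_mul, map_add, map_pow, map_ofNat] using congr_arg g hu
  have gv : 3 * g v = g x1 + g D.ω ^ 2 * g x2 + g D.ω * g x3 := by simpa only [map_mul, map_add, map_pow, map_ofNat] using congr_arg g hv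
  have c3 : (3 : Ω) ≠ 0 := by norm_num
  have A : ∀ k : Ω, 3 * g u = k * (3 * u) → k * (3 * g v) = 3 * v → (g u = k * u ∧ k * g v = v) := by
    intro k e1 e2
    exact ⟨mul_left_cancel₀ c3 (by linear_combination e1), mul_left_cancel₀ c3 (by linear_combination e2)⟩
  have B : ∀ k : Ω, 3 * g u = k * (3 * v) → k * (3 * g v) = 3 * u → (g u = k * v ∧ k * g v = u) := by
    intro k e1 e2
    exact ⟨mul_left_cancel₀ c3 (by linear_combination e1), mul_left_cancel₀ c3 (by linear_combination e2)⟩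
  have k0 : (1 : Ω) ^ 3 = 1 := by norm_num
  have k2 : (D.ω ^ 2) ^ 3 = 1 := by rw [← pow_mul, mul_comm, pow_mul, h3, one_pow]
  rcases D.conj_ω g with hw | hw <;> rw [hw] at gu gv <;>
    rcases hp with ⟨a, b, c⟩ | ⟨a, b, c⟩ | ⟨a, b, c⟩ | ⟨a, b, c⟩ | ⟨a, b, c⟩ | ⟨a, b, c⟩ <;> rw [a, b, c] at gu gv
  · exact ⟨1, k0, .inl (A _ (by rw [gu, hu]; clear A B hu hv gu gv hw a b c c3 k0 k2; grind) (by rw [gv, hv]; clear A B hu hv gu gv hw a b c c3 k0 k2; grind))⟩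
  · exact ⟨_, k2, .inl (A _ (by rw [gu, hu]; clear A B hu hv gu gv hw a b c c3 k0 k2; grind) (by rw [gv, hv]; clear A B hu hv gu gv hw a b c c3 k0 k2; grind))⟩
  · exact ⟨_, h3, .inl (A _ (by rw [gu, hu]; clear A B hu hv gu gv hw a b c c3 k0 k2; grind) (by rw [gv, hv]; clear A B hu hv gu gv hw a b c c3 k0 k2; grind))⟩
  · exact ⟨_, k0, .inr (B _ (by rw [gu, hv]; clear A B hu hv gu gv hw a b c c3 k0 k2; grind) (by rw [gv, hu]; clear A B hu hv gu gv hw a b c c3 k0 k2; grind))⟩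
  · exact ⟨_, h3, .inr (B _ (by rw [gu, hv]; clear A B hu hv gu gv hw a b c c3 k0 k2; grind) (by rw [gv, hu]; clear A B hu hv gu gv hw a b c c3 k0 k2; grind))⟩
  · exact ⟨_, k2, .inr (B _ (by rw [gu, hv]; clear A B hu hv gu gv hw a b c c3 k0 k2; grind) (by rw [gv, hu]; clear A B hu hv gu gv hw a b c c3 k0 k2; grind))⟩
  · exact ⟨_, k0, .inr (B _ (by rw [gu, hv]; clear A B hu hv gu gv hw a b c c3 k0 k2; grind) (by rw [gv, hu]; clear A B hu hv gu gv hw a b c c3 k0 k2; grind))⟩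
  · exact ⟨_, h3, .inr (B _ (by rw [gu, hv]; clear A B hu hv gu gv hw a b c c3 k0 k2; grind) (by rw [gv, hu]; clear A B hu hv gu gv hw a b c c3 k0 k2; grind))⟩
  · exact ⟨_, k2, .inr (B _ (by rw [gu, hv]; clear A B hu hv gu gv hw a b c c3 k0 k2; grind) (by rw [gv, hu]; clear A B hu hv gu gv hw a b c c3 k0 k2; grind))⟩
  · exact ⟨_, k0, .inl (A _ (by rw [gu, hu]; clear A B hu hv gu gv hw a b c c3 k0 k2; grind) (by rw [gv, hv]; clear A B hu hv gu gv hw a b c c3 k0 k2; grind))⟩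
  · exact ⟨_, k2, .inl (A _ (by rw [gu, hu]; clear A B hu hv gu gv hw a b c c3 k0 k2; grind) (by rw [gv, hv]; clear A B hu hv gu gv hw a b c c3 k0 k2; grind))⟩
  · exact ⟨_, h3, .inl (A _ (by rw [gu, hu]; clear A B hu hv gu gv hw a b c c3 k0 k2; grind) (by rw [gv, hv]; clear A B hu hv gu gv hw a b c c3 k0 k2; grind))⟩

lemma cubic_fin {x1 x2 x3 u v p q m : Ω} (hu : 3 * u = x1 + D.ω * x2 + D.ω ^ 2 * x3) (hv : 3 * v = x1 + D.ω ^ 2 * x2 + D.ω * x3)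
    (hm : 3 * m = x1 + x2 + x3) (hmE : m ∈ D.E) (hpq : p + q ∈ D.E)
    (h : (u = p ∧ v = q) ∨ (u = D.ω * p ∧ v = D.ω ^ 2 * q) ∨ (u = D.ω ^ 2 * p ∧ v = D.ω * q)) :
    x1 ∈ D.E ∨ x2 ∈ D.E ∨ x3 ∈ D.E := by
  have c3 : (3 : Ω) ≠ 0 := by norm_num
  have hE : m + (p + q) ∈ D.E := add_mem hmE hpq
  have h3 := D.ω3
  have hω := D.hω
  rcases h with ⟨e1, e2⟩ | ⟨e1, e2⟩ | ⟨e1, e2⟩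
  · left; have : x1 = m + (p + q) := mul_left_cancel₀ c3 (by rw [← e1, ← e2]; linear_combination -hm - hu - hv - (x2 + x3) * hω)
    rwa [this]
  · right; left
    have : x2 = m + (p + q) := mul_left_cancel₀ c3 (by
      have f1 : 3 * p = D.ω ^ 2 * (3 * u) := by rw [e1]; linear_combination -3 * p * h3
      have f2 : 3 * q = D.ω * (3 * v) := by rw [e2]; linear_combination -3 * q * h3
      rw [hu] at f1; rw [hv] at f2
      clear hu hv e1 e2 hE hpq hmE c3; grind)
    rwa [this]
  · right; right
    have : x3 = m + (p + q) := mul_left_cancel₀ c3 (by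
      have f1 : 3 * p = D.ω * (3 * u) := by rw [e1]; linear_combination -3 * p * h3
      have f2 : 3 * q = D.ω ^ 2 * (3 * v) := by rw [e2]; linear_combination -3 * q * h3
      rw [hu] at f1; rw [hv] at f2
      clear hu hv e1 e2 hE hpq hmE c3; grind)
    rwa [this]

end Dat

namespace Dat
variable {F Ω : Type*} [Field F] [Field Ω] [Algebra F Ω] [IsGalois F Ω] [CharZero Ω] (D : Dat F Ω)

lemma base_E {x : Ω} (h : ∃ c : F, algebraMap F Ω c = x) : x ∈ D.E := by
  obtain ⟨c, rfl⟩ := h; exact D.E.algebraMap_mem c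

lemma r_E : D.r ∈ D.E := (D.mem_E _).2 fun _ h => h

lemma caseA [Algebra ℚ_[2] F] [FiniteDimensional ℚ_[2] F] (hμ : ¬ ∃ ζ : F, IsPrimitiveRoot ζ 3)
    {x1 x2 x3 u v m : Ω} (hu : 3 * u = x1 + D.ω * x2 + D.ω ^ 2 * x3) (hv : 3 * v = x1 + D.ω ^ 2 * x2 + D.ω * x3)
    (hm : 3 * m = x1 + x2 + x3) (hmF : ∃ c : F, algebraMap F Ω c = m) (hn : ∃ c : F, algebraMap F Ω c = u * v)
    (hP : ∃ c : F, algebraMap F Ω c = u ^ 3) (u0 : u ≠ 0) :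
    x1 ∈ D.E ∨ x2 ∈ D.E ∨ x3 ∈ D.E := by
  obtain ⟨b, hb⟩ := hP
  have b0 : b ≠ 0 := by
    rintro rfl; rw [map_zero] at hb; exact u0 (pow_eq_zero_iff (by norm_num) |>.1 hb.symm)
  obtain ⟨w, hwE, hw⟩ : ∃ w ∈ D.E, u ^ 3 = w ^ 3 := by
    obtain ⟨c, h | h | h⟩ := cube_rep F hμ D.ha b0
    · exact ⟨_, D.base_E ⟨c, rfl⟩, by rw [← hb, h, map_pow]⟩
    · exact ⟨_, mul_mem D.r_E (D.base_E ⟨c, rfl⟩), by rw [← hb, h, map_mul, map_pow, mul_pow, D.hr]⟩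
    · exact ⟨_, mul_mem (pow_mem D.r_E 2) (D.base_E ⟨c, rfl⟩), by
        rw [← hb, h, map_mul, map_pow, map_pow, mul_pow, ← D.hr]; ring⟩
  have w0 : w ≠ 0 := by
    rintro rfl
    exact u0 (pow_eq_zero_iff (by norm_num) |>.1 (hw.trans (by simp)))
  have hq : u * v / w ∈ D.E := div_mem (D.base_E hn) hwE
  have h3 := D.ω3
  have o0 := D.ω0
  refine D.cubic_fin hu hv hm (D.base_E hmF) (p := w) (q := u * v / w) (add_mem hwE hq) ?_
  rcases D.cube_root w0 hw with h | h | h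
  · left; exact ⟨h, by rw [h]; field_simp⟩
  · right; left; exact ⟨h, by rw [h]; field_simp; linear_combination -v * h3⟩
  · right; right; exact ⟨h, by rw [h]; field_simp; linear_combination -v * h3⟩

lemma caseB [Algebra ℚ_[2] F] [FiniteDimensional ℚ_[2] F]
    {x1 x2 x3 u v m : Ω} (hu : 3 * u = x1 + D.ω * x2 + D.ω ^ 2 * x3) (hv : 3 * v = x1 + D.ω ^ 2 * x2 + D.ω * x3)
    (hm : 3 * m = x1 + x2 + x3) (hmF : ∃ c : F, algebraMap F Ω c = m) (hn : ∃ c : F, algebraMap F Ω c = u * v)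
    (hP : ∀ g : Ω ≃ₐ[F] Ω, (g (u ^ 3) = u ^ 3 ∧ g (v ^ 3) = v ^ 3) ∨ (g (u ^ 3) = v ^ 3 ∧ g (v ^ 3) = u ^ 3))
    (hodd : ∃ g : Ω ≃ₐ[F] Ω, g x1 = x1 ∧ g x2 = x3 ∧ g x3 = x2) (hA : ∃ g : Ω ≃ₐ[F] Ω, g (u ^ 3) ≠ u ^ 3) :
    x1 ∈ D.E ∨ x2 ∈ D.E ∨ x3 ∈ D.E := by
  have h3 := D.ω3
  have c3 : (3 : Ω) ≠ 0 := by norm_num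
  obtain ⟨g0, hg0⟩ := hA
  set P := u ^ 3 with hPdef
  set R := v ^ 3 with hRdef
  have g0P : g0 P = R := ((hP g0).resolve_left fun h => hg0 h.1).1
  have hne : P ≠ R := fun h => hg0 (g0P.trans h.symm)
  have g0R : g0 R = P := ((hP g0).resolve_left fun h => hg0 h.1).2
  have P0 : P ≠ 0 := fun h => hg0 (by rw [h, map_zero])
  have u0 : u ≠ 0 := fun h => P0 (by rw [hPdef, h]; simp)
  let M : IntermediateField F Ω := F⟮P⟯
  have hmemM : ∀ x, x ∈ M ↔ ∀ g : Ω ≃ₐ[F] Ω, g P = P → g x = x := by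
    intro x; rw [mem_adjoin_iff']; simp
  have hPM : P ∈ M := (hmemM _).2 fun _ h => h
  -- ω ∉ M
  have hωM : D.ω ∉ M := by
    intro hω
    have hω' := (hmemM _).1 hω
    have ht : D.ω ^ 2 ≠ D.ω := fun h => D.ω1 (by
      have := D.ω0
      exact mul_left_cancel₀ this (by linear_combination h))
    have tP : D.t P = R := by
      rcases hP D.t with h | h
      · exact absurd (by simpa using hω' _ h.1) ht
      · exact h.1
    have tR : D.t R = P := by
      rcases hP D.t with h | h
      · exact absurd (by simpa using hω' _ h.1) ht
      · exact h.2
    have key : ∀ h : Ω ≃ₐ[F] Ω, h D.ω = D.ω → h P = P := by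
      intro h hh
      rcases hP h with h' | h'
      · exact h'.1
      · exfalso
        have := hω' (D.t * h) (by rw [AlgEquiv.mul_apply, h'.1, tR])
        rw [AlgEquiv.mul_apply, hh, D.t_ω] at this
        exact ht this
    obtain ⟨g, e1, e2, e3⟩ := hodd
    have gu : 3 * g u = x1 + g D.ω * x3 + g D.ω ^ 2 * x2 := by
      have := congr_arg g hu
      simpa only [map_mul, map_add, map_pow, map_ofNat, e1, e2, e3] using this
    rcases D.conj_ω g with hw | hw
    · have : g u = v := mul_left_cancel₀ c3 (by rw [gu, hv, hw]; ring)
      have h1 := key g hw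
      rw [hPdef, map_pow, this] at h1
      exact hne h1.symm
    · have : g u = u := mul_left_cancel₀ c3 (by rw [gu, hu, hw]; linear_combination D.ω * x2 * h3)
      have h1 := hω' g (by rw [hPdef, map_pow, this])
      rw [hw] at h1
      exact ht h1
  have hμM := D.no_prim M hωM
  -- instances
  have hfd : FiniteDimensional F M := adjoin.finiteDimensional (Algebra.IsIntegral.isIntegral P)
  letI : Algebra ℚ_[2] M := ((algebraMap F M).comp (algebraMap ℚ_[2] F)).toAlgebra
  haveI : IsScalarTower ℚ_[2] F M := IsScalarTower.of_algebraMap_eq fun _ => rfl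
  haveI : FiniteDimensional ℚ_[2] M := FiniteDimensional.trans ℚ_[2] F M
  -- norm from M
  have hnorm : ∀ c ∈ M, ∃ d : F, algebraMap F Ω d = c * g0 c := by
    intro c hc
    rw [mem_base_iff]
    intro g
    have hc' := (hmemM _).1 hc
    have hgg : g0 (g0 c) = c := hc' (g0 * g0) (by rw [AlgEquiv.mul_apply, g0P, g0R])
    rcases hP g with h | h
    · have h1 := hc' g h.1
      have h2 := hc' (g0 * (g * g0)) (by simp only [AlgEquiv.mul_apply, g0P, h.2, g0R])
      simp only [AlgEquiv.mul_apply] at h2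
      have h4 : g (g0 c) = g0 c := g0.injective (by rw [h2, hgg])
      rw [map_mul, h1, h4]
    · have h1 := hc' (g0 * g) (by simp only [AlgEquiv.mul_apply, h.1, g0R])
      have h2 := hc' (g * g0) (by simp only [AlgEquiv.mul_apply, g0P, h.2])
      simp only [AlgEquiv.mul_apply] at h1 h2
      have h4 : g c = g0 c := g0.injective (by rw [h1, hgg])
      rw [map_mul, h4, h2, mul_comm]
  have haM : ¬ ∃ c : M, c ^ 3 = algebraMap F M D.a := by
    rintro ⟨⟨c, hc⟩, h⟩
    have h : c ^ 3 = algebraMap F Ω D.a := congr_arg (algebraMap M Ω) h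
    obtain ⟨d, hd⟩ := hnorm c hc
    have h1 : d ^ 3 = D.a ^ 2 := by
      apply (algebraMap F Ω).injective
      rw [map_pow, hd, mul_pow, ← map_pow g0, h, AlgEquiv.commutes, map_pow, sq]
    have d0 : d ≠ 0 := by rintro rfl; exact D.a0 (by simpa using h1.symm)
    exact D.ha ⟨D.a / d, by rw [div_pow, h1]; field_simp [D.a0]⟩
  obtain ⟨n, hn⟩ := hn
  have hn3 : algebraMap F Ω n ^ 3 = P * R := by rw [hn, hPdef, hRdef]; ring
  have n0 : n ≠ 0 := by
    rintro rfl
    rw [map_zero] at hn3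
    have : P * R = 0 := by rw [← hn3]; simp
    rcases mul_eq_zero.1 this with h | h
    · exact P0 h
    · exact P0 (by rw [← g0R, h, map_zero])
  have noti : ∀ (d e : F), d ≠ 0 → n ^ 3 = e * d ^ 3 → ∃ c, c ^ 3 = e := by
    intro d e h0 h
    exact ⟨n / d, by rw [div_pow, h]; field_simp⟩
  have normP : ∀ (e : F) (c : M), P = algebraMap F Ω e * (c : Ω) ^ 3 → ∃ d : F, algebraMap F Ω d = (c : Ω) * g0 c ∧ n ^ 3 = e ^ 2 * d ^ 3 ∧ d ≠ 0 := by
    intro e c h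
    obtain ⟨d, hd⟩ := hnorm c c.2
    have hh : n ^ 3 = e ^ 2 * d ^ 3 := by
      apply (algebraMap F Ω).injective
      rw [map_pow, hn3, ← g0P, h]
      simp only [map_mul, map_pow, AlgEquiv.commutes, hd]
      ring
    refine ⟨d, hd, hh, ?_⟩
    rintro rfl
    exact n0 (pow_eq_zero_iff (by norm_num) |>.1 (hh.trans (by simp)))
  have ne2 : ¬ ∃ c, c ^ 3 = D.a ^ 2 := by
    rintro ⟨c, hc⟩
    have c0 : c ≠ 0 := by rintro rfl; exact D.a0 (by simpa using hc.symm)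
    exact D.ha ⟨D.a / c, by rw [div_pow, hc]; field_simp [D.a0]⟩
  have ne4 : ¬ ∃ c, c ^ 3 = (D.a ^ 2) ^ 2 := by
    rintro ⟨c, hc⟩
    exact D.ha ⟨c / D.a, by rw [div_pow, hc]; field_simp [D.a0]⟩
  obtain ⟨c, hc⟩ : ∃ c : M, P = (c : Ω) ^ 3 := by
    obtain ⟨c, h | h | h⟩ := cube_rep M hμM haM (b := ⟨P, hPM⟩) (fun h => P0 (congr_arg (algebraMap M Ω) h))
    · exact ⟨c, congr_arg (algebraMap M Ω) h⟩
    · exfalso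
      obtain ⟨d, _, hd, d0⟩ := normP D.a c (congr_arg (algebraMap M Ω) h)
      exact ne2 (noti _ _ d0 hd)
    · exfalso
      obtain ⟨d, _, hd, d0⟩ := normP (D.a ^ 2) c (by rw [map_pow]; exact congr_arg (algebraMap M Ω) h)
      exact ne4 (noti _ _ d0 hd)
  obtain ⟨d, hd, hnd, d0⟩ := normP 1 c (by simpa using hc)
  have c0 : (c : Ω) ≠ 0 := fun h => P0 (by rw [hc, h]; simp)
  have gc0 : g0 (c : Ω) ≠ 0 := by simpa using c0
  -- n = d
  have hnd : n = d := by
    have h1 : (algebraMap F Ω (n / d)) ^ 3 = 1 := by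
      rw [← map_pow, div_pow, hnd]; field_simp; simp
    rcases D.cube_eq_one h1 with h | h | h
    · have : n / d = 1 := (algebraMap F Ω).injective (by simpa using h)
      rwa [div_eq_one_iff_eq d0] at this
    · exact absurd ⟨_, h⟩ D.hωF
    · refine absurd ⟨(n / d) ^ 2, ?_⟩ D.hωF
      rw [map_pow, h]; linear_combination D.ω * h3
  have huv : u * v = c * g0 c := by rw [← hn, hnd, hd]
  have htr : (c : Ω) + g0 c ∈ D.E := by
    apply D.base_E
    rw [mem_base_iff]
    intro g
    have hc' := (hmemM _).1 c.2
    have hgg : g0 (g0 c) = c := hc' (g0 * g0) (by rw [AlgEquiv.mul_apply, g0P, g0R])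
    rcases hP g with h | h
    · have h1 := hc' g h.1
      have h2 := hc' (g0 * (g * g0)) (by simp only [AlgEquiv.mul_apply, g0P, h.2, g0R])
      simp only [AlgEquiv.mul_apply] at h2
      have h4 : g (g0 c) = g0 c := g0.injective (by rw [h2, hgg])
      rw [map_add, h1, h4]
    · have h1 := hc' (g0 * g) (by simp only [AlgEquiv.mul_apply, h.1, g0R])
      have h2 := hc' (g * g0) (by simp only [AlgEquiv.mul_apply, g0P, h.2])
      simp only [AlgEquiv.mul_apply] at h1 h2
      have h4 : g c = g0 c := g0.injective (by rw [h1, hgg])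
      rw [map_add, h4, h2, add_comm]
  have o0 := D.ω0
  refine D.cubic_fin hu hv hm (D.base_E hmF) (p := c) (q := g0 c) htr ?_
  rcases D.cube_root c0 (hPdef.symm.trans hc) with h | h | h
  · left; exact ⟨h, mul_left_cancel₀ u0 (by rw [huv, h])⟩
  · right; left; exact ⟨h, mul_left_cancel₀ u0 (by rw [huv, h]; linear_combination -c * g0 c * h3)⟩
  · right; right; exact ⟨h, mul_left_cancel₀ u0 (by rw [huv, h]; linear_combination -c * g0 c * h3)⟩

/-- six-way permutation condition -/
def Six (x1 x2 x3 : Ω) (g : Ω ≃ₐ[F] Ω) : Prop :=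
  (g x1 = x1 ∧ g x2 = x2 ∧ g x3 = x3) ∨ (g x1 = x2 ∧ g x2 = x3 ∧ g x3 = x1) ∨ (g x1 = x3 ∧ g x2 = x1 ∧ g x3 = x2) ∨
      (g x1 = x1 ∧ g x2 = x3 ∧ g x3 = x2) ∨ (g x1 = x2 ∧ g x2 = x1 ∧ g x3 = x3) ∨ (g x1 = x3 ∧ g x2 = x2 ∧ g x3 = x1)

theorem cubic [Algebra ℚ_[2] F] [FiniteDimensional ℚ_[2] F] (hμ : ¬ ∃ ζ : F, IsPrimitiveRoot ζ 3)
    {x1 x2 x3 : Ω} (h12 : x1 ≠ x2) (hp : ∀ g : Ω ≃ₐ[F] Ω, Six x1 x2 x3 g)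
    (hodd : ∃ g : Ω ≃ₐ[F] Ω, g x1 = x1 ∧ g x2 = x3 ∧ g x3 = x2) :
    x1 ∈ D.E ∨ x2 ∈ D.E ∨ x3 ∈ D.E := by
  have h3 := D.ω3
  have c3 : (3 : Ω) ≠ 0 := by norm_num
  obtain ⟨u, hu⟩ : ∃ u, 3 * u = x1 + D.ω * x2 + D.ω ^ 2 * x3 := ⟨_, mul_div_cancel₀ _ c3⟩
  obtain ⟨v, hv⟩ : ∃ u, 3 * u = x1 + D.ω ^ 2 * x2 + D.ω * x3 := ⟨_, mul_div_cancel₀ _ c3⟩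
  obtain ⟨m, hm⟩ : ∃ u, 3 * u = x1 + x2 + x3 := ⟨_, mul_div_cancel₀ _ c3⟩
  have hmF : ∃ c : F, algebraMap F Ω c = m := by
    rw [mem_base_iff]
    intro g
    apply mul_left_cancel₀ c3
    have := congr_arg g hm
    simp only [map_mul, map_add, map_ofNat] at this
    rw [this, hm]
    rcases hp g with ⟨a, b, c⟩ | ⟨a, b, c⟩ | ⟨a, b, c⟩ | ⟨a, b, c⟩ | ⟨a, b, c⟩ | ⟨a, b, c⟩ <;> rw [a, b, c] <;> ring
  have hn : ∃ c : F, algebraMap F Ω c = u * v := by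
    rw [mem_base_iff]
    intro g
    obtain ⟨k, hk, ⟨e1, e2⟩ | ⟨e1, e2⟩⟩ := D.act_uv hu hv g (hp g)
    · rw [map_mul, e1]; linear_combination u * e2
    · rw [map_mul, e1]; linear_combination v * e2
  have hP : ∀ g : Ω ≃ₐ[F] Ω, (g (u ^ 3) = u ^ 3 ∧ g (v ^ 3) = v ^ 3) ∨ (g (u ^ 3) = v ^ 3 ∧ g (v ^ 3) = u ^ 3) := by
    intro g
    obtain ⟨k, hk, ⟨e1, e2⟩ | ⟨e1, e2⟩⟩ := D.act_uv hu hv g (hp g)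
    · left
      constructor
      · rw [map_pow, e1, mul_pow, hk, one_mul]
      · rw [map_pow]; conv_rhs => rw [← e2, mul_pow, hk, one_mul]
    · right
      constructor
      · rw [map_pow, e1, mul_pow, hk, one_mul]
      · rw [map_pow]; conv_rhs => rw [← e2, mul_pow, hk, one_mul]
  by_cases hA : ∃ g : Ω ≃ₐ[F] Ω, g (u ^ 3) ≠ u ^ 3
  · exact D.caseB hu hv hm hmF hn hP hodd hA
  push Not at hA
  by_cases u0 : u = 0
  · have v0 : v ≠ 0 := by
      intro v0
      apply h12
      rw [u0] at hu; rw [v0] at hv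
      have hω := D.hω
      have h23 : (D.ω - D.ω ^ 2) * (x2 - x3) = 0 := by linear_combination hv - hu
      rcases mul_eq_zero.1 h23 with h | h
      · exfalso
        exact D.ω1 (mul_left_cancel₀ D.ω0 (by linear_combination -h))
      · linear_combination -hu - x2 * hω + D.ω ^ 2 * h
    have hB : ∀ g : Ω ≃ₐ[F] Ω, g (v ^ 3) = v ^ 3 := by
      intro g
      rcases hP g with h | h
      · exact h.2
      · have h1 := hA g
        rw [h.2, ← h1, h.1]
    have := D.caseA hμ (x1 := x1) (x2 := x3) (x3 := x2) (u := v) (v := u) (m := m) (by rw [hv]; ring) (by rw [hu]; ring) (by rw [hm]; ring) hmF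
      (by rwa [mul_comm]) ((mem_base_iff _).2 hB) v0
    tauto
  · exact D.caseA hμ hu hv hm hmF hn ((mem_base_iff _).2 hA) u0

end Dat

namespace Dat
variable {F Ω : Type*} [Field F] [Field Ω] [Algebra F Ω] [IsGalois F Ω] [CharZero Ω] (D : Dat F Ω)

lemma fix_sq {y z : Ω} (h : y ^ 2 = z ^ 2) (g : Ω ≃ₐ[F] Ω) : g y = y ↔ g z = z := by
  rcases sq_eq_sq_iff_eq_or_eq_neg.1 h with rfl | rfl <;> simp

theorem good_of [IsAlgClosed Ω] (K : IntermediateField F Ω) {z1 z2 z3 : Ω}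
    (hK : ∀ g : Ω ≃ₐ[F] Ω, (∀ x ∈ K, g x = x) ↔ (g z1 = z1 ∧ g z2 = z2 ∧ g z3 = z3))
    (hp : ∀ g : Ω ≃ₐ[F] Ω, Six (z1 ^ 2) (z2 ^ 2) (z3 ^ 2) g)
    (hpr : ∃ c : F, algebraMap F Ω c = z1 * z2 * z3)
    (hneg : ∃ g : Ω ≃ₐ[F] Ω, g z1 = - z1) (hmov : ∃ g : Ω ≃ₐ[F] Ω, g (z1 ^ 2) ≠ z1 ^ 2)
    (hE : z1 ^ 2 ∈ D.E) : D.Good (z1 ^ 2) ∧ D.KK (z1 ^ 2) = K := by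
  have hF : ¬ ∃ c : F, algebraMap F Ω c = z1 ^ 2 := by
    rw [mem_base_iff]; push Not; exact hmov
  have z0 : z1 ≠ 0 := by rintro rfl; exact hF ⟨0, by simp⟩
  have hs : D.s (z1 ^ 2) ≠ z1 ^ 2 := fun h => hF (D.base_of_s hE h)
  have h3 := D.sss hE
  have cyc : (D.s (z1 ^ 2) = z2 ^ 2 ∧ D.s (D.s (z1 ^ 2)) = z3 ^ 2) ∨
      (D.s (z1 ^ 2) = z3 ^ 2 ∧ D.s (D.s (z1 ^ 2)) = z2 ^ 2) := by
    rcases hp D.s with ⟨a, b, c⟩ | ⟨a, b, c⟩ | ⟨a, b, c⟩ | ⟨a, b, c⟩ | ⟨a, b, c⟩ | ⟨a, b, c⟩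
    · exact absurd a hs
    · left; exact ⟨a, by rw [a, b]⟩
    · right; exact ⟨a, by rw [a, c]⟩
    · exact absurd a hs
    · exfalso; rw [a, b] at h3; exact hs h3
    · exfalso; rw [a, c] at h3; exact hs h3
  have hG : D.Good (z1 ^ 2) := by
    refine ⟨hE, pow_ne_zero _ z0, ?_, ?_⟩
    · obtain ⟨c, hc⟩ := hpr
      refine ⟨c, ?_⟩
      rw [hc]
      rcases cyc with ⟨h, h'⟩ | ⟨h, h'⟩ <;> rw [h', h] <;> ring
    · rintro ⟨y, hy, hyz⟩
      obtain ⟨g, hg⟩ := hneg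
      have hr := D.fix_r_of hE hF g (by rw [map_pow, hg]; ring)
      have := (fix_sq hyz g).1 ((D.mem_E y).1 hy g hr)
      rw [hg] at this
      exact z0 (self_eq_neg.1 this.symm)
  refine ⟨hG, ?_⟩
  obtain ⟨Q⟩ := hG.quad
  ext x
  rw [mem_field_iff K, Q.mem_iff hG]
  refine forall_congr' fun g => imp_congr_left ?_
  rw [hK]
  rcases cyc with ⟨h, h'⟩ | ⟨h, h'⟩
  · rw [fix_sq Q.h1 g, fix_sq (Q.h2.trans h) g, fix_sq (Q.h3.trans h') g]
  · rw [fix_sq Q.h1 g, fix_sq (Q.h2.trans h) g, fix_sq (Q.h3.trans h') g]; tauto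

lemma exists_theta (K : IntermediateField F Ω) [FiniteDimensional F K] [IsGalois F K]
    (φ : (K ≃ₐ[F] K) ≃* Equiv.Perm (Fin 4)) :
    ∃ (ψ : (Ω ≃ₐ[F] Ω) →* Equiv.Perm (Fin 4)) (θ : Fin 4 → Ω), Function.Surjective ψ ∧
      (∀ g, ψ g = 1 ↔ ∀ x ∈ K, g x = x) ∧ Function.Injective θ ∧ (∀ g i, g (θ i) = θ (ψ g i)) ∧
      θ 0 + θ 1 + θ 2 + θ 3 = 0 := by
  let ρ : (Ω ≃ₐ[F] Ω) →* (K ≃ₐ[F] K) := AlgEquiv.restrictNormalHom K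
  have hρ : Function.Surjective ρ := AlgEquiv.restrictNormalHom_surjective (F := F) (K₁ := K) (E := Ω)
  have hρx : ∀ g (x : K), ((ρ g x : K) : Ω) = g x := fun g x => AlgEquiv.restrictNormal_commutes g K x
  let ψ : (Ω ≃ₐ[F] Ω) →* Equiv.Perm (Fin 4) := φ.toMonoidHom.comp ρ
  have hψs : Function.Surjective ψ := φ.surjective.comp hρ
  have hψ1 : ∀ g, ψ g = 1 ↔ ∀ x ∈ K, g x = x := by
    intro g
    have : ψ g = 1 ↔ ρ g = 1 := by
      show φ (ρ g) = 1 ↔ _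
      exact map_eq_one_iff φ φ.injective
    rw [this]
    constructor
    · intro h x hx
      have := hρx g ⟨x, hx⟩
      rw [h] at this; exact this.symm
    · intro h
      ext x
      rw [hρx]; exact h x x.2
  let H : Subgroup (K ≃ₐ[F] K) := (MulAction.stabilizer (Equiv.Perm (Fin 4)) (0 : Fin 4)).comap φ.toMonoidHom
  obtain ⟨a, ha⟩ := Field.exists_primitive_element F (fixedField H)
  have hfix : ∀ τ : K ≃ₐ[F] K, τ (a : K) = a ↔ φ τ 0 = 0 := by
    intro τ
    have h1 : τ ∈ H ↔ φ τ 0 = 0 := Iff.rfl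
    have h2 : τ ∈ H ↔ τ ∈ fixingSubgroup (fixedField H) := by rw [fixingSubgroup_fixedField H]
    rw [← h1, h2, IntermediateField.mem_fixingSubgroup_iff]
    constructor
    · intro h x hx
      have hm : (⟨x, hx⟩ : fixedField H) ∈ F⟮a⟯ := by rw [ha]; trivial
      have key : ∀ y ∈ F⟮a⟯, τ (y : K) = y := by
        intro y hy
        induction hy using IntermediateField.adjoin_induction with
        | mem x hx => rw [Set.mem_singleton_iff.1 hx]; exact h
        | algebraMap x => exact τ.commutes x
        | add x y _ _ h1 h2 => simp only [IntermediateField.coe_add, map_add, h1, h2]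
        | inv x _ h1 => simp only [IntermediateField.coe_inv, map_inv₀, h1]
        | mul x y _ _ h1 h2 => simp only [IntermediateField.coe_mul, map_mul, h1, h2]
      exact key _ hm
    · intro h; exact h a a.2
  have hfix' : ∀ g : Ω ≃ₐ[F] Ω, g ((a : K) : Ω) = (a : K) ↔ ψ g 0 = 0 := by
    intro g
    rw [← hρx, show ψ g 0 = 0 ↔ _ from (hfix (ρ g)).symm]
    exact Subtype.coe_injective.eq_iff
  have hg : ∀ i : Fin 4, ∃ g : Ω ≃ₐ[F] Ω, ψ g 0 = i := by
    intro i
    obtain ⟨g, hg⟩ := hψs (Equiv.swap 0 i)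
    exact ⟨g, by rw [hg]; simp⟩
  choose γ hγ using hg
  let θ : Fin 4 → Ω := fun i => γ i ((a : K) : Ω)
  have hgen : ∀ g h : Ω ≃ₐ[F] Ω, g ((a : K) : Ω) = h (a : K) ↔ ψ g 0 = ψ h 0 := by
    intro g h
    have h1 := hfix' (h⁻¹ * g)
    have h2 : ψ (h⁻¹ * g) 0 = 0 ↔ ψ g 0 = ψ h 0 := by
      rw [map_mul, map_inv, Equiv.Perm.mul_apply, Equiv.Perm.inv_eq_iff_eq]
    have h3 : (h⁻¹ * g) ((a : K) : Ω) = (a : K) ↔ g ((a : K) : Ω) = h (a : K) := by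
      rw [AlgEquiv.mul_apply]
      exact AlgEquiv.symm_apply_eq h
    rw [← h2, ← h1, h3]
  have hθi : Function.Injective θ := by
    intro i j h
    have := (hgen _ _).1 h
    rwa [hγ, hγ] at this
  have hθg : ∀ g i, g (θ i) = θ (ψ g i) := by
    intro g i
    refine (hgen (g * γ i) _).2 ?_
    rw [map_mul, Equiv.Perm.mul_apply, hγ, hγ]
  let S := (∑ i, θ i) / 4
  have hS : ∀ g : Ω ≃ₐ[F] Ω, g S = S := by
    intro g
    simp only [S, map_div₀, map_sum, hθg, map_ofNat]
    rw [Equiv.sum_comp (ψ g) θ]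
  refine ⟨ψ, fun i => θ i - S, hψs, hψ1, fun i j h => hθi (sub_left_injective h), ?_, ?_⟩
  · intro g i; rw [map_sub, hS, hθg]
  · simp only [S, Fin.sum_univ_four]; ring

end Dat

/-- index of the pairing of `Fin 4` containing `{i, j}` -/
def pairing (i j : Fin 4) : Fin 4 := ![![0,1,2,3],![1,0,3,2],![2,3,0,1],![3,2,1,0]] i j

lemma pairing_perm : ∀ p : Equiv.Perm (Fin 4),
    let k1 := pairing (p 0) (p 1)
    let k2 := pairing (p 0) (p 2)
    let k3 := pairing (p 0) (p 3)
    (k1 = 1 ∧ k2 = 2 ∧ k3 = 3) ∨ (k1 = 2 ∧ k2 = 3 ∧ k3 = 1) ∨ (k1 = 3 ∧ k2 = 1 ∧ k3 = 2) ∨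
    (k1 = 1 ∧ k2 = 3 ∧ k3 = 2) ∨ (k1 = 2 ∧ k2 = 1 ∧ k3 = 3) ∨ (k1 = 3 ∧ k2 = 2 ∧ k3 = 1) := by decide

lemma pairing_sq {Ω : Type*} [Field Ω] (θ : Fin 4 → Ω) (h0 : θ 0 + θ 1 + θ 2 + θ 3 = 0) (i j : Fin 4) (hij : i ≠ j) :
    (θ i + θ j) ^ 2 = (θ 0 + θ (pairing i j)) ^ 2 := by
  fin_cases i <;> fin_cases j <;> simp [pairing] at hij ⊢ <;>
    first
    | ring1
    | linear_combination (θ 2 + θ 3 - θ 0 - θ 1) * h0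
    | linear_combination (θ 1 + θ 3 - θ 0 - θ 2) * h0
    | linear_combination (θ 1 + θ 2 - θ 0 - θ 3) * h0

lemma esymm_perm {Ω : Type*} [Field Ω] (θ : Fin 4 → Ω) (h0 : θ 0 + θ 1 + θ 2 + θ 3 = 0) (p : Equiv.Perm (Fin 4)) :
    (θ (p 0) + θ (p 1)) * (θ (p 0) + θ (p 2)) * (θ (p 0) + θ (p 3)) =
    (θ 0 + θ 1) * (θ 0 + θ 2) * (θ 0 + θ 3) := by
  have key : ∀ η : Fin 4 → Ω, η 0 + η 1 + η 2 + η 3 = 0 → (η 0 + η 1) * (η 0 + η 2) * (η 0 + η 3) =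
      ∑ i, ∏ j, if j = i then 1 else η j := by
    intro η h
    simp [Fin.sum_univ_four, Fin.prod_univ_four]
    linear_combination (η 0) ^ 2 * h
  have hs : θ (p 0) + θ (p 1) + θ (p 2) + θ (p 3) = 0 := by
    have := Equiv.sum_comp p θ
    rw [Fin.sum_univ_four, Fin.sum_univ_four] at this
    rw [this, h0]
  rw [key θ h0, key (fun i => θ (p i)) hs, ← Equiv.sum_comp p (fun i => ∏ j, if j = i then 1 else θ j)]
  refine Finset.sum_congr rfl fun i _ => ?_
  rw [← Equiv.prod_comp p (fun j => if j = p i then 1 else θ j)]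
  refine Finset.prod_congr rfl fun j _ => ?_
  simp

namespace Dat
variable {F Ω : Type*} [Field F] [Field Ω] [Algebra F Ω] [IsGalois F Ω] [CharZero Ω] (D : Dat F Ω)

lemma Six.rot {x1 x2 x3 : Ω} {g : Ω ≃ₐ[F] Ω} (h : Six x1 x2 x3 g) : Six x2 x3 x1 g := by
  rcases h with ⟨a, b, c⟩ | ⟨a, b, c⟩ | ⟨a, b, c⟩ | ⟨a, b, c⟩ | ⟨a, b, c⟩ | ⟨a, b, c⟩
  · exact .inl ⟨b, c, a⟩
  · exact .inr (.inl ⟨b, c, a⟩)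
  · exact .inr (.inr (.inl ⟨b, c, a⟩))
  · exact .inr (.inr (.inr (.inr (.inl ⟨b, c, a⟩))))
  · exact .inr (.inr (.inr (.inr (.inr ⟨b, c, a⟩))))
  · exact .inr (.inr (.inr (.inl ⟨b, c, a⟩)))

theorem surj [IsAlgClosed Ω] [Algebra ℚ_[2] F] [FiniteDimensional ℚ_[2] F] (hμ : ¬ ∃ ζ : F, IsPrimitiveRoot ζ 3)
    (K : IntermediateField F Ω) [FiniteDimensional F K] [IsGalois F K]
    (φ : (K ≃ₐ[F] K) ≃* Equiv.Perm (Fin 4)) : ∃ α, D.Good α ∧ D.KK α = K := by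
  obtain ⟨ψ, θ, hψs, hψ1, hθi, hθ, h0⟩ := exists_theta K φ
  obtain ⟨z1, e1⟩ : ∃ z, z = θ 0 + θ 1 := ⟨_, rfl⟩
  obtain ⟨z2, e2⟩ : ∃ z, z = θ 0 + θ 2 := ⟨_, rfl⟩
  obtain ⟨z3, e3⟩ : ∃ z, z = θ 0 + θ 3 := ⟨_, rfl⟩
  have c2 : (2 : Ω) ≠ 0 := by norm_num
  have gz1 : ∀ g : Ω ≃ₐ[F] Ω, g z1 = θ (ψ g 0) + θ (ψ g 1) := fun g => by rw [e1, map_add, hθ, hθ]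
  have gz2 : ∀ g : Ω ≃ₐ[F] Ω, g z2 = θ (ψ g 0) + θ (ψ g 2) := fun g => by rw [e2, map_add, hθ, hθ]
  have gz3 : ∀ g : Ω ≃ₐ[F] Ω, g z3 = θ (ψ g 0) + θ (ψ g 3) := fun g => by rw [e3, map_add, hθ, hθ]
  have hK : ∀ g : Ω ≃ₐ[F] Ω, (∀ x ∈ K, g x = x) ↔ (g z1 = z1 ∧ g z2 = z2 ∧ g z3 = z3) := by
    intro g
    rw [← hψ1]
    constructor
    · intro h; rw [gz1, gz2, gz3, h]; simp [e1, e2, e3]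
    · rintro ⟨h1, h2, h3⟩
      have t0 : 2 * θ 0 = z1 + z2 + z3 := by rw [e1, e2, e3]; linear_combination -h0
      have g0 : g (θ 0) = θ 0 := mul_left_cancel₀ c2 (by
        have := congr_arg g t0
        simp only [map_mul, map_add, map_ofNat, h1, h2, h3] at this
        rw [this, t0])
      have g1 : g (θ 1) = θ 1 := by
        have : θ 1 = z1 - θ 0 := by rw [e1]; ring
        rw [this, map_sub, h1, g0]
      have g2 : g (θ 2) = θ 2 := by
        have : θ 2 = z2 - θ 0 := by rw [e2]; ring
        rw [this, map_sub, h2, g0]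
      have g3 : g (θ 3) = θ 3 := by
        have : θ 3 = z3 - θ 0 := by rw [e3]; ring
        rw [this, map_sub, h3, g0]
      ext i
      have : ψ g i = i := hθi (by rw [← hθ]; fin_cases i; exacts [g0, g1, g2, g3])
      rw [this]; rfl
  have hp : ∀ g : Ω ≃ₐ[F] Ω, Six (z1 ^ 2) (z2 ^ 2) (z3 ^ 2) g := by
    intro g
    have hne : ∀ i, i ≠ 0 → ψ g 0 ≠ ψ g i := fun i hi h => hi ((ψ g).injective h).symm
    unfold Six
    rw [map_pow, map_pow, map_pow, gz1, gz2, gz3, pairing_sq θ h0 _ _ (hne 1 (by decide)),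
      pairing_sq θ h0 _ _ (hne 2 (by decide)), pairing_sq θ h0 _ _ (hne 3 (by decide)), e1, e2, e3]
    rcases pairing_perm (ψ g) with ⟨a, b, c⟩ | ⟨a, b, c⟩ | ⟨a, b, c⟩ | ⟨a, b, c⟩ | ⟨a, b, c⟩ | ⟨a, b, c⟩ <;> rw [a, b, c]
    · exact .inl ⟨rfl, rfl, rfl⟩
    · exact .inr (.inl ⟨rfl, rfl, rfl⟩)
    · exact .inr (.inr (.inl ⟨rfl, rfl, rfl⟩))
    · exact .inr (.inr (.inr (.inl ⟨rfl, rfl, rfl⟩)))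
    · exact .inr (.inr (.inr (.inr (.inl ⟨rfl, rfl, rfl⟩))))
    · exact .inr (.inr (.inr (.inr (.inr ⟨rfl, rfl, rfl⟩))))
  have hpr : ∃ c : F, algebraMap F Ω c = z1 * z2 * z3 := by
    rw [mem_base_iff]
    intro g
    rw [map_mul, map_mul, gz1, gz2, gz3, esymm_perm θ h0, e1, e2, e3]
  have n0 : ∀ i j, i ≠ j → θ i - θ j ≠ 0 := fun i j h hh => h (hθi (sub_eq_zero.1 hh))
  have h12 : z1 ^ 2 ≠ z2 ^ 2 := by
    intro h
    have : (θ 1 - θ 2) * (θ 0 - θ 3) = 0 := by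
      rw [e1, e2] at h; linear_combination h - (θ 1 - θ 2) * h0
    rcases mul_eq_zero.1 this with h | h
    exacts [n0 _ _ (by decide) h, n0 _ _ (by decide) h]
  have h13 : z1 ^ 2 ≠ z3 ^ 2 := by
    intro h
    have : (θ 1 - θ 3) * (θ 0 - θ 2) = 0 := by
      rw [e1, e3] at h; linear_combination h - (θ 1 - θ 3) * h0
    rcases mul_eq_zero.1 this with h | h
    exacts [n0 _ _ (by decide) h, n0 _ _ (by decide) h]
  obtain ⟨a1, ha1⟩ := hψs (c[0, 2] * c[1, 3])
  obtain ⟨a2, ha2⟩ := hψs (c[0, 1] * c[2, 3])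
  obtain ⟨b1, hb1⟩ := hψs c[1, 2]
  obtain ⟨b2, hb2⟩ := hψs c[1, 3]
  obtain ⟨b3, hb3⟩ := hψs c[2, 3]
  have neg1 : a1 z1 = - z1 := by
    rw [gz1, ha1, e1, show (c[0, 2] * c[1, 3] : Equiv.Perm (Fin 4)) 0 = 2 by decide,
      show (c[0, 2] * c[1, 3] : Equiv.Perm (Fin 4)) 1 = 3 by decide]
    linear_combination h0
  have neg2 : a2 z2 = - z2 := by
    rw [gz2, ha2, e2, show (c[0, 1] * c[2, 3] : Equiv.Perm (Fin 4)) 0 = 1 by decide,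
      show (c[0, 1] * c[2, 3] : Equiv.Perm (Fin 4)) 2 = 3 by decide]
    linear_combination h0
  have neg3 : a2 z3 = - z3 := by
    rw [gz3, ha2, e3, show (c[0, 1] * c[2, 3] : Equiv.Perm (Fin 4)) 0 = 1 by decide,
      show (c[0, 1] * c[2, 3] : Equiv.Perm (Fin 4)) 3 = 2 by decide]
    linear_combination h0
  have m1 : b1 z1 = z2 := by
    rw [gz1, hb1, e2, show (c[1, 2] : Equiv.Perm (Fin 4)) 0 = 0 by decide, show (c[1, 2] : Equiv.Perm (Fin 4)) 1 = 2 by decide]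
  have m2 : b1 z2 = z1 := by
    rw [gz2, hb1, e1, show (c[1, 2] : Equiv.Perm (Fin 4)) 0 = 0 by decide, show (c[1, 2] : Equiv.Perm (Fin 4)) 2 = 1 by decide]
  have m3 : b2 z3 = z1 := by
    rw [gz3, hb2, e1, show (c[1, 3] : Equiv.Perm (Fin 4)) 0 = 0 by decide, show (c[1, 3] : Equiv.Perm (Fin 4)) 3 = 1 by decide]
  have o1 : b3 z1 = z1 := by
    rw [gz1, hb3, e1, show (c[2, 3] : Equiv.Perm (Fin 4)) 0 = 0 by decide, show (c[2, 3] : Equiv.Perm (Fin 4)) 1 = 1 by decide]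
  have o2 : b3 z2 = z3 := by
    rw [gz2, hb3, e3, show (c[2, 3] : Equiv.Perm (Fin 4)) 0 = 0 by decide, show (c[2, 3] : Equiv.Perm (Fin 4)) 2 = 3 by decide]
  have o3 : b3 z3 = z2 := by
    rw [gz3, hb3, e2, show (c[2, 3] : Equiv.Perm (Fin 4)) 0 = 0 by decide, show (c[2, 3] : Equiv.Perm (Fin 4)) 3 = 2 by decide]
  clear hb1 hb2 hb3 ha1 ha2 gz1 gz2 gz3 e1 e2 e3
  rcases D.cubic hμ h12 hp ⟨b3, by rw [map_pow, o1], by rw [map_pow, o2], by rw [map_pow, o3]⟩ with h | h | h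
  · exact ⟨_, D.good_of K hK hp hpr ⟨_, neg1⟩ ⟨b1, by rw [map_pow, m1]; exact h12.symm⟩ h⟩
  · refine ⟨_, D.good_of K (z1 := z2) (z2 := z3) (z3 := z1) (fun g => (hK g).trans (by tauto)) (fun g => ?_) ?_ ⟨_, neg2⟩ ⟨b1, by rw [map_pow, m2]; exact h12⟩ h⟩
    · exact (hp g).rot
    · rwa [show z2 * z3 * z1 = z1 * z2 * z3 by ring]
  · refine ⟨_, D.good_of K (z1 := z3) (z2 := z1) (z3 := z2) (fun g => (hK g).trans (by tauto)) (fun g => ?_) ?_ ⟨_, neg3⟩ ⟨b2, by rw [map_pow, m3]; exact h13⟩ h⟩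
    · exact (hp g).rot.rot
    · rwa [show z3 * z1 * z2 = z1 * z2 * z3 by ring]

end Dat


lemma exists_dat (F : Type*) [Field F] [Algebra ℚ_[2] F] [FiniteDimensional ℚ_[2] F]
    [CharZero F] (hμ3 : ¬ ∃ ζ : F, IsPrimitiveRoot ζ 3) : Nonempty (Dat F (AlgebraicClosure F)) := by
  have hna : ∃ a : F, ¬ ∃ c : F, c ^ 3 = a := by
    by_contra! h
    have h3 := index_cube F hμ3
    have : (powMonoidHom 3 : Fˣ →* Fˣ).range = ⊤ := by
      rw [eq_top_iff]
      intro u _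
      obtain ⟨c, hc⟩ := h u
      have c0 : c ≠ 0 := by rintro rfl; exact u.ne_zero (by rw [← hc]; simp)
      exact ⟨Units.mk0 c c0, by ext; simpa using hc⟩
    rw [this, Subgroup.index_top] at h3
    norm_num at h3
  obtain ⟨a, ha⟩ := hna
  obtain ⟨ζ, hζ⟩ := HasEnoughRootsOfUnity.exists_primitiveRoot (AlgebraicClosure F) 3
  obtain ⟨r, hr⟩ := IsAlgClosed.exists_pow_nat_eq (algebraMap F (AlgebraicClosure F) a) (n := 3) (by norm_num)
  refine ⟨⟨ζ, r, a, ?_, ?_, hr, ha⟩⟩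
  · have h1 : ζ ^ 3 = 1 := hζ.pow_eq_one
    have h2 : ζ - 1 ≠ 0 := sub_ne_zero.2 (hζ.ne_one (by norm_num))
    apply mul_left_cancel₀ h2
    linear_combination h1
  · rintro ⟨c, rfl⟩
    exact hμ3 ⟨c, hζ.of_map_of_injective (algebraMap F (AlgebraicClosure F)).injective⟩

namespace Dat
variable {F Ω : Type*} [Field F] [Field Ω] [Algebra F Ω] [IsGalois F Ω] [CharZero Ω] [IsAlgClosed Ω] (D : Dat F Ω)

lemma mem_H_iff (u : D.Eˣ) : u ∈ D.H ↔
    ∃ c : F, algebraMap F Ω c ^ 2 = ((u : D.E) : Ω) * D.s (u : D.E) * D.s (D.s (u : D.E)) := by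
  rw [← D.norm_eq]
  constructor
  · rintro ⟨c, hc⟩
    refine ⟨c, ?_⟩
    have := congr_arg Units.val hc
    simp only [powMonoidHom_apply, Units.val_pow_eq_pow_val, Units.coe_map, MonoidHom.coe_coe] at this
    rw [← map_pow, this]
  · rintro ⟨c, hc⟩
    rw [← map_pow] at hc
    have h := (algebraMap F Ω).injective hc
    have n0 : Algebra.norm F (u : D.E) ≠ 0 := Algebra.norm_ne_zero_iff.2 u.ne_zero
    have c0 : c ≠ 0 := by rintro rfl; exact n0 (by rw [← h]; simp)
    exact ⟨Units.mk0 c c0, by ext; simpa using h⟩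

lemma mem_N_iff (u : D.H) : u ∈ D.N ↔ ∃ z ∈ D.E, z ^ 2 = (((u : D.Eˣ) : D.E) : Ω) := by
  constructor
  · rintro ⟨c, hc⟩
    refine ⟨(c : D.E), (c : D.E).2, ?_⟩
    have := congr_arg (fun x : D.Eˣ => ((x : D.E) : Ω)) hc
    simpa using this
  · rintro ⟨z, hz, h⟩
    have z0 : (⟨z, hz⟩ : D.E) ≠ 0 := by
      intro hh
      have : z = 0 := congr_arg Subtype.val hh
      rw [this] at h
      have := (u : D.Eˣ).ne_zero
      apply this
      ext
      rw [← h]; simp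
    refine ⟨Units.mk0 _ z0, ?_⟩
    ext
    simpa using h

lemma good_iff (u : D.H) (hu : u ∉ D.N) : D.Good (((u : D.Eˣ) : D.E) : Ω) where
  mem := ((u : D.Eˣ) : D.E).2
  ne := fun h => (u : D.Eˣ).ne_zero (Subtype.ext h)
  sq := (D.mem_H_iff _).1 u.2
  nsq := fun h => hu ((D.mem_N_iff u).2 h)

include D in
theorem count [Algebra ℚ_[2] F] [FiniteDimensional ℚ_[2] F] (hμ : ¬ ∃ ζ : F, IsPrimitiveRoot ζ 3) :
    Nat.card {K : IntermediateField F Ω //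
      FiniteDimensional F K ∧ IsGalois F K ∧ Nonempty ((K ≃ₐ[F] K) ≃* Equiv.Perm (Fin 4))} =
    2 ^ (2 * Module.finrank ℚ_[2] F) - 1 := by
  have hN := index_N D
  rw [← hN]
  refine card_of_coset D.N (by rw [hN]; positivity)
    (fun u hu => ⟨D.KK (((u : D.Eˣ) : D.E) : Ω), ?_, ?_⟩) ?_ ?_
  · obtain ⟨Q⟩ := (D.good_iff u hu).quad
    exact Q.finDim (D.good_iff u hu)
  · obtain ⟨Q⟩ := (D.good_iff u hu).quad
    exact Q.gal (D.good_iff u hu)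
  · rintro ⟨K, h1, h2, ⟨φ⟩⟩
    obtain ⟨α, hα, hK⟩ := D.surj hμ K φ
    have u0 : (⟨α, hα.mem⟩ : D.E) ≠ 0 := fun h => hα.ne (congr_arg Subtype.val h)
    let u : D.H := ⟨Units.mk0 _ u0, (D.mem_H_iff _).2 hα.sq⟩
    refine ⟨u, fun h => hα.nsq ((D.mem_N_iff u).1 h), Subtype.ext hK⟩
  · intro u v hu hv
    rw [Subtype.mk.injEq, mem_N_iff]
    have gu := D.good_iff u hu
    have gv := D.good_iff v hv
    have e : (((u⁻¹ * v : D.H) : D.Eˣ) : D.E) = (((u : D.Eˣ) : D.E))⁻¹ * ((v : D.Eˣ) : D.E) := by simp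
    have e' : ((((u⁻¹ * v : D.H) : D.Eˣ) : D.E) : Ω) = ((((u : D.Eˣ) : D.E) : Ω))⁻¹ * (((v : D.Eˣ) : D.E) : Ω) := by
      rw [e]; simp
    rw [e']
    constructor
    · intro h
      obtain ⟨γ, hγ, h⟩ := KK_inj gu gv h
      refine ⟨γ, hγ, ?_⟩
      rw [h, inv_mul_cancel_left₀ gu.ne]
    · rintro ⟨γ, hγ, h⟩
      have hv' : (((v : D.Eˣ) : D.E) : Ω) = (((u : D.Eˣ) : D.E) : Ω) * γ ^ 2 := by
        rw [h, mul_inv_cancel_left₀ gu.ne]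
      have γ0 : γ ≠ 0 := by rintro rfl; exact gv.ne (by rw [hv']; simp)
      rw [hv', D.KK_eq hγ γ0]

end Dat

/-- The condition `f = 1` (residue degree one) is expressed by saying that the residue
field of the ring of integers of `F` (the integral closure of `ℤ₂` in `F`) has exactly
`2 = 2 ^ 1` elements. -/
theorem stmt9 (F : Type*) [Field F] [Algebra ℚ_[2] F] [FiniteDimensional ℚ_[2] F]
    [Algebra ℤ_[2] F] [IsScalarTower ℤ_[2] ℚ_[2] F]
    [IsLocalRing (integralClosure ℤ_[2] F)]
    (m : ℕ) (hm : Module.finrank ℚ_[2] F = m)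
    (hμ3 : ¬ ∃ ζ : F, IsPrimitiveRoot ζ 3)
    (hnot : ¬ ((¬ ∃ ζ : F, IsPrimitiveRoot ζ 4) ∧ Even m ∧
      Nat.card (IsLocalRing.ResidueField (integralClosure ℤ_[2] F)) = 2)) :
    nu F (Equiv.Perm (Fin 4)) = 2 ^ (2 * m) - 1 := by
  have hc : CharZero F := charZero_of_injective_algebraMap (algebraMap ℚ_[2] F).injective
  have hc' : CharZero (AlgebraicClosure F) :=
    charZero_of_injective_algebraMap (algebraMap F (AlgebraicClosure F)).injective
  have hG : IsGalois F (AlgebraicClosure F) := ⟨⟩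
  obtain ⟨D⟩ := exists_dat F hμ3
  subst hm
  exact D.count hμ3
end
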